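/- Let e ≥ 2, r = 3, with D^u as above for a fixed u ∈ {1,…,6}, and let M ∈ D^u. Then Pt(0,M) is Kleshchev (with respect to its multicharge) if and only if M belongs to the following list: for u = 1: {γ^1_{kl} : i_k < j_l and l ≠ z+1} ∪ {γ^1_{kl} : j_l < i_k and k ≠ y+1} ∪ {α^1_k : i_k < j_{z+1}} ∪ {β^1_l : j_l < i_{y+1}}; for u = 2 or u = 3: {γ^u_{kl} : j_l < i_k, or (k ≠ 1 and l ≠ z+1)} ∪ {α^u_k : k ≠ 1 and i_k < j_{z+1}} ∪ {β^u_l : i_1 < j_l}; for u = 4 or u = 5: {γ^u_{kl} : i_k < j_l, or (l ≠ 1 and k ≠ y+1)} ∪ {α^u_k : k ≠ y+1 and j_1 < i_k} ∪ {β^u_l : j_l < i_{y+1}}; for u = 6: {γ^6_{kl} : i_k < j_l and k ≠ 1} ∪ {γ^6_{kl} : j_l < i_k and l ≠ 1} ∪ {α^6_k : j_1 < i_k} ∪ {β^6_l : i_1 < j_l}. -/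

import Mathlib

open scoped Classical

namespace AK
noncomputable section



/-! ### Matrices, order from base tuple, abacus β-sets -/

/-- The order ≺ on columns determined by a base tuple `B`. -/
def prec {e : ℕ} (B : Fin e → ℕ) (i j : Fin e) : Prop :=
  B i < B j ∨ (B i = B j ∧ i < j)

/-- `rank B i = π(B)⁻¹(i)`, the number of columns ≺-smaller than `i`. -/
def rank {e : ℕ} (B : Fin e → ℕ) (i : Fin e) : Fin e :=
  ⟨(Finset.univ.filter (fun j => prec B j i)).card, by
    have h1 : (Finset.univ.filter (fun j => prec B j i)) ⊆ Finset.univ.erase i := by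
      intro j hj
      rw [Finset.mem_filter] at hj
      refine Finset.mem_erase.mpr ⟨?_, Finset.mem_univ j⟩
      rintro rfl
      rcases hj.2 with h | ⟨-, h⟩ <;> exact lt_irrefl _ h
    have h2 := Finset.card_le_card h1
    have h3 : (Finset.univ.erase i).card < Finset.univ.card :=
      Finset.card_erase_lt_of_mem (Finset.mem_univ i)
    simpa using lt_of_le_of_lt h2 h3⟩

/-- The number of beads on runner `i` of the abacus of component `s` of `Pt(B,M)`. -/
def beads {e r : ℕ} (B : Fin e → ℕ) (M : Fin r → Fin e → Bool) (s : Fin r) (i : Fin e) : ℕ :=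
  B i + (if M s (rank B i) then 1 else 0)

/-- The canonical β-set of component `s` of `Pt(B,M)`. -/
def Tset {e r : ℕ} (B : Fin e → ℕ) (M : Fin r → Fin e → Bool) (s : Fin r) : Set ℤ :=
  {z | z < 0 ∨ (0 ≤ z ∧ ∃ h : z.toNat % e < e, z.toNat / e < beads B M s ⟨z.toNat % e, h⟩)}

/-- `n_s`, the total number of beads of component `s`. -/
def nsum {e r : ℕ} (B : Fin e → ℕ) (M : Fin r → Fin e → Bool) (s : Fin r) : ℕ :=
  ∑ i : Fin e, beads B M s i

/-- Decreasing enumeration of a set of integers: `tEnum T x` is `t_{x+1}`. -/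
noncomputable def tEnum (T : Set ℤ) : ℕ → ℤ
  | 0 => sSup T
  | (x + 1) => sSup (T ∩ Set.Iio (tEnum T x))

/-- The multipartition `Pt(B,M)`: component `s`, part `p+1` (0-indexed parts). -/
noncomputable def PtPart {e r : ℕ} (B : Fin e → ℕ) (M : Fin r → Fin e → Bool)
    (s : Fin r) (p : ℕ) : ℕ :=
  (tEnum (Tset B M s) p + (p + 1) - (nsum B M s : ℤ)).toNat

/-- The multicharge of `Pt(B,M)`. -/
noncomputable def PtCharge {e r : ℕ} (B : Fin e → ℕ) (M : Fin r → Fin e → Bool)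
    (s : Fin r) : ZMod e :=
  (nsum B M s : ZMod e)

/-! ### Nodes, good nodes and Kleshchev multipartitions -/

/-- A node `(s, x, y)` (all 0-indexed). -/
abbrev Node (r : ℕ) := Fin r × ℕ × ℕ

/-- `A` is above `B`. -/
def NodeAbove {r : ℕ} (A B : Node r) : Prop :=
  A.1 < B.1 ∨ (A.1 = B.1 ∧ A.2.1 < B.2.1)

/-- The residue of a node. -/
def res {e r : ℕ} (a : Fin r → ZMod e) (A : Node r) : ZMod e :=
  a A.1 - (A.2.1 : ZMod e) + (A.2.2 : ZMod e)

/-- `A` is a removable node of `lam`. -/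
def Removable {r : ℕ} (lam : Fin r → ℕ → ℕ) (A : Node r) : Prop :=
  A.2.2 + 1 = lam A.1 A.2.1 ∧ lam A.1 (A.2.1 + 1) < lam A.1 A.2.1

/-- `A` is an addable node of `lam`. -/
def Addable {r : ℕ} (lam : Fin r → ℕ → ℕ) (A : Node r) : Prop :=
  A.2.2 = lam A.1 A.2.1 ∧ (A.2.1 = 0 ∨ lam A.1 A.2.1 < lam A.1 (A.2.1 - 1))

/-- `A` is a normal node of `lam`. -/
def Normal {e r : ℕ} (a : Fin r → ZMod e) (lam : Fin r → ℕ → ℕ) (A : Node r) : Prop :=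
  Removable lam A ∧
    ∀ B : Node r, Addable lam B → res a B = res a A → NodeAbove A B →
      Set.ncard {C : Node r | Addable lam C ∧ res a C = res a A ∧ NodeAbove A C ∧ NodeAbove C B}
        < Set.ncard {C : Node r | Removable lam C ∧ res a C = res a A ∧ NodeAbove A C ∧ NodeAbove C B}

/-- `A` is a good node of `lam`: normal, and highest among normal nodes of its residue. -/
def Good {e r : ℕ} (a : Fin r → ZMod e) (lam : Fin r → ℕ → ℕ) (A : Node r) : Prop :=
  Normal a lam A ∧ ∀ B : Node r, Normal a lam B → res a B = res a A → B ≠ A → NodeAbove A B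

/-- Remove the node `A` from `lam`. -/
def removeNode {r : ℕ} (lam : Fin r → ℕ → ℕ) (A : Node r) : Fin r → ℕ → ℕ :=
  fun s x => if s = A.1 ∧ x = A.2.1 then lam s x - 1 else lam s x

/-- Kleshchev multipartitions (for the multicharge `a`). -/
inductive IsKleshchev {e r : ℕ} (a : Fin r → ZMod e) : (Fin r → ℕ → ℕ) → Prop
  | empty : IsKleshchev a (fun _ _ => 0)
  | step (lam : Fin r → ℕ → ℕ) (A : Node r) (hA : Good a lam A)
      (h : IsKleshchev a (removeNode lam A)) : IsKleshchev a lam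

/-! ### Weights and bead swaps -/

/-- `δ₊^M(t,s)`. -/
def deltaP {e r : ℕ} (M : Fin r → Fin e → Bool) (t s : Fin r) : ℕ :=
  (Finset.univ.filter (fun i => M t i = true ∧ M s i = false)).card

/-- `wt^M(t,s)`. -/
def wtPair {e r : ℕ} (M : Fin r → Fin e → Bool) (t s : Fin r) : ℕ :=
  min (deltaP M t s) (deltaP M s t)

/-- `wt(M)`. -/
def wtM {e r : ℕ} (M : Fin r → Fin e → Bool) : ℕ :=
  ∑ t : Fin r, ∑ s ∈ Finset.univ.filter (· < t), wtPair M t s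

/-- `M'` is obtained from `M` by a bead swap. -/
def BeadSwap {e r : ℕ} (M M' : Fin r → Fin e → Bool) : Prop :=
  ∃ i j : Fin e, i ≠ j ∧ ∃ s t : Fin r, s ≠ t ∧
    M s i = true ∧ M t j = true ∧ M s j = false ∧ M t i = false ∧
    M' s i = false ∧ M' t j = false ∧ M' s j = true ∧ M' t i = true ∧
    (∀ s' i', (s' ≠ s ∧ s' ≠ t) ∨ (i' ≠ i ∧ i' ≠ j) → M' s' i' = M s' i')




/-! ### The families `α^u_k`, `β^u_l`, `γ^u_{kl}` for `r = 3` -/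

def xcol : Fin 6 → Fin 3 → Bool := fun _ => ![false, false, false]

def ycol : Fin 6 → Fin 3 → Bool :=
  ![![false,true,true], ![true,false,false], ![true,true,false],
    ![false,false,true], ![false,true,true], ![true,false,false]]

def zcol : Fin 6 → Fin 3 → Bool :=
  ![![false,false,true], ![true,false,true], ![false,true,false],
    ![true,false,true], ![false,true,false], ![true,true,false]]

def oycol : Fin 6 → Fin 3 → Bool :=
  ![![true,false,true], ![false,false,true], ![false,true,true],
    ![true,false,false], ![true,true,false], ![false,true,false]]

def ozcol : Fin 6 → Fin 3 → Bool :=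
  ![![false,true,false], ![true,true,false], ![true,false,false],
    ![false,true,true], ![false,false,true], ![true,false,true]]

def aacol : Fin 6 → Fin 3 → Bool :=
  ![![true,true,false], ![false,true,false], ![true,false,true],
    ![false,true,false], ![true,false,true], ![false,false,true]]

def abcol : Fin 6 → Fin 3 → Bool :=
  ![![true,false,false], ![false,true,true], ![false,false,true],
    ![true,true,false], ![true,false,false], ![false,true,true]]

variable {e : ℕ}

/-- The matrix `α^u_k`. -/
def alphaM (Y Z : Finset (Fin e)) {y : ℕ} (hY : Y.card = y + 1) (u : Fin 6)
    (k : Fin (y + 1)) : Fin 3 → Fin e → Bool :=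
  fun s c =>
    if c = Y.orderEmbOfFin hY k then aacol u s
    else if c ∈ Y then ycol u s
    else if c ∈ Z then zcol u s
    else false

/-- The matrix `β^u_l`. -/
def betaM (Y Z : Finset (Fin e)) {z : ℕ} (hZ : Z.card = z + 1) (u : Fin 6)
    (l : Fin (z + 1)) : Fin 3 → Fin e → Bool :=
  fun s c =>
    if c = Z.orderEmbOfFin hZ l then abcol u s
    else if c ∈ Z then zcol u s
    else if c ∈ Y then ycol u s
    else false

/-- The matrix `γ^u_{kl}`. -/
def gammaM (Y Z : Finset (Fin e)) {y z : ℕ} (hY : Y.card = y + 1) (hZ : Z.card = z + 1)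
    (u : Fin 6) (k : Fin (y + 1)) (l : Fin (z + 1)) : Fin 3 → Fin e → Bool :=
  fun s c =>
    if c = Y.orderEmbOfFin hY k then oycol u s
    else if c = Z.orderEmbOfFin hZ l then ozcol u s
    else if c ∈ Y then ycol u s
    else if c ∈ Z then zcol u s
    else false

/-- The set `D^u` of matrices in the block. -/
def Duset (Y Z : Finset (Fin e)) {y z : ℕ} (hY : Y.card = y + 1) (hZ : Z.card = z + 1)
    (u : Fin 6) : Set (Fin 3 → Fin e → Bool) :=
  {A | (∃ k, A = alphaM Y Z hY u k) ∨ (∃ l, A = betaM Y Z hZ u l) ∨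
       (∃ k l, A = gammaM Y Z hY hZ u k l)}

/-! ### Dictionary between nodes and beads -/

/-- The β-number attached to row `x`. -/
def bf (n : ℕ) (l : ℕ → ℕ) (x : ℕ) : ℤ := (l x : ℤ) + n - 1 - x

/-- Indicator. -/
def v (b : Bool) : ℤ := if b then 1 else 0

/-- `T` is the bead configuration of `lam`. -/
structure Rep (e : ℕ) (n : Fin 3 → ℕ) (T : Fin 3 → ℤ → Bool) (lam : Fin 3 → ℕ → ℕ) : Prop where
  anti : ∀ s, StrictAnti (bf (n s) (lam s))
  rng : ∀ s b, T s b = true ↔ ∃ x, bf (n s) (lam s) x = b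
  neg : ∀ s b, b < 0 → T s b = true
  hi : ∀ s b, (e : ℤ) ≤ b → T s b = false
  cnt : ∀ s, ∑ i ∈ Finset.Ico (0 : ℤ) e, v (T s i) = n s

/-- removable bead in row `s` at column `i`. -/
def IsR (T : Fin 3 → ℤ → Bool) (i : ℤ) (s : Fin 3) : Prop := T s (i - 1) = false ∧ T s i = true
/-- addable bead in row `s` at column `i`. -/
def IsA (T : Fin 3 → ℤ → Bool) (i : ℤ) (s : Fin 3) : Prop := T s (i - 1) = true ∧ T s i = false

/-- normal row for `i`. -/
def NormalRow (T : Fin 3 → ℤ → Bool) (i : ℤ) (s : Fin 3) : Prop :=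
  IsR T i s ∧ ∀ s', IsA T i s' → s < s' →
    (Finset.univ.filter (fun t => IsA T i t ∧ s < t ∧ t < s')).card <
    (Finset.univ.filter (fun t => IsR T i t ∧ s < t ∧ t < s')).card

/-- good row for `i`. -/
def GoodRow (T : Fin 3 → ℤ → Bool) (i : ℤ) (s : Fin 3) : Prop :=
  NormalRow T i s ∧ ∀ s', NormalRow T i s' → s' ≠ s → s < s'

section dict
variable {n : Fin 3 → ℕ} {T : Fin 3 → ℤ → Bool} {lam : Fin 3 → ℕ → ℕ}

lemma Rep.lt_iff (h : Rep e n T lam) (s : Fin 3) {x x' : ℕ} :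
    bf (n s) (lam s) x < bf (n s) (lam s) x' ↔ x' < x := (h.anti s).lt_iff_gt

lemma Rep.rem_of (h : Rep e n T lam) {A : Node 3} (hA : Removable lam A) :
    T A.1 (bf (n A.1) (lam A.1) A.2.1) = true ∧ T A.1 (bf (n A.1) (lam A.1) A.2.1 - 1) = false := by
  refine ⟨(h.rng _ _).2 ⟨_, rfl⟩, ?_⟩
  rw [Bool.eq_false_iff]
  intro hT
  obtain ⟨x', hx'⟩ := (h.rng _ _).1 hT
  have h1 : A.2.1 < x' := by rw [← h.lt_iff A.1]; omega
  have h2 : bf (n A.1) (lam A.1) x' ≤ bf (n A.1) (lam A.1) (A.2.1 + 1) := (h.anti A.1).antitone h1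
  have h3 := hA.2
  simp only [bf] at *
  push_cast at *
  omega

lemma Rep.add_of (h : Rep e n T lam) {A : Node 3} (hA : Addable lam A) :
    T A.1 (bf (n A.1) (lam A.1) A.2.1) = true ∧ T A.1 (bf (n A.1) (lam A.1) A.2.1 + 1) = false := by
  refine ⟨(h.rng _ _).2 ⟨_, rfl⟩, ?_⟩
  rw [Bool.eq_false_iff]
  intro hT
  obtain ⟨x', hx'⟩ := (h.rng _ _).1 hT
  have h1 : x' < A.2.1 := by rw [← h.lt_iff A.1]; omega
  have h2 : bf (n A.1) (lam A.1) (A.2.1 - 1) ≤ bf (n A.1) (lam A.1) x' :=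
    (h.anti A.1).antitone (by omega)
  have h3 := hA.2
  simp only [bf] at *
  omega

lemma Rep.rem_ex (h : Rep e n T lam) {s : Fin 3} {b : ℤ} (h1 : T s b = true)
    (h2 : T s (b - 1) = false) :
    ∃ A : Node 3, A.1 = s ∧ Removable lam A ∧ bf (n s) (lam s) A.2.1 = b := by
  obtain ⟨x, hx⟩ := (h.rng _ _).1 h1
  have h3 : bf (n s) (lam s) (x + 1) < bf (n s) (lam s) x := h.anti s (Nat.lt_succ_self x)
  have h4 : bf (n s) (lam s) (x + 1) ≠ b - 1 := by
    intro h5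
    have := (h.rng s (b - 1)).2 ⟨_, h5⟩
    rw [h2] at this; cases this
  have h5 : lam s (x + 1) < lam s x := by
    simp only [bf] at *
    push_cast at *
    omega
  exact ⟨(s, x, lam s x - 1), rfl, ⟨by simp only; omega, h5⟩, hx⟩

lemma Rep.add_ex (h : Rep e n T lam) {s : Fin 3} {b : ℤ} (h1 : T s (b - 1) = true)
    (h2 : T s b = false) :
    ∃ A : Node 3, A.1 = s ∧ Addable lam A ∧ bf (n s) (lam s) A.2.1 + 1 = b := by
  obtain ⟨x, hx⟩ := (h.rng _ _).1 h1
  refine ⟨(s, x, lam s x), rfl, ⟨rfl, ?_⟩, by simp only; omega⟩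
  rcases Nat.eq_zero_or_pos x with h0 | h0
  · exact Or.inl h0
  right
  have h3 : bf (n s) (lam s) x < bf (n s) (lam s) (x - 1) := h.anti s (by omega)
  have h4 : bf (n s) (lam s) (x - 1) ≠ b := by
    intro h5
    have := (h.rng s b).2 ⟨_, h5⟩
    rw [h2] at this; cases this
  simp only [bf] at *
  omega

lemma Rep.rem_range (h : Rep e n T lam) {A : Node 3} (hA : Removable lam A) :
    1 ≤ bf (n A.1) (lam A.1) A.2.1 ∧ bf (n A.1) (lam A.1) A.2.1 < e := by
  obtain ⟨h1, h2⟩ := h.rem_of hA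
  constructor
  · by_contra hc
    rw [h.neg _ _ (by omega)] at h2; cases h2
  · by_contra hc
    rw [h.hi _ _ (by omega)] at h1; cases h1

lemma Rep.add_range (h : Rep e n T lam) {A : Node 3} (hA : Addable lam A) :
    0 ≤ bf (n A.1) (lam A.1) A.2.1 + 1 ∧ bf (n A.1) (lam A.1) A.2.1 + 1 ≤ e := by
  obtain ⟨h1, h2⟩ := h.add_of hA
  constructor
  · by_contra hc
    rw [h.neg _ _ (by omega)] at h2; cases h2
  · by_contra hc
    rw [h.hi _ _ (by omega)] at h1; cases h1

lemma res_rem {a : Fin 3 → ZMod e} (ha : ∀ s, a s = (n s : ZMod e)) {A : Node 3}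
    (hA : Removable lam A) : res a A = ((bf (n A.1) (lam A.1) A.2.1 : ℤ) : ZMod e) := by
  simp only [res, bf, ha, ← hA.1]
  push_cast
  ring

lemma res_add {a : Fin 3 → ZMod e} (ha : ∀ s, a s = (n s : ZMod e)) {A : Node 3}
    (hA : Addable lam A) : res a A = ((bf (n A.1) (lam A.1) A.2.1 + 1 : ℤ) : ZMod e) := by
  simp only [res, bf, ha, hA.1]
  push_cast
  ring

lemma cast_inj {i c : ℤ} (h1 : 1 ≤ i) (h2 : i < e) (h3 : 0 ≤ c) (h4 : c ≤ e)
    (h : ((c : ℤ) : ZMod e) = (i : ℤ)) : c = i := by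
  rw [ZMod.intCast_eq_intCast_iff] at h
  have := h.dvd
  obtain ⟨k, hk⟩ := this
  have : k = 0 := by
    by_contra hk0
    rcases lt_or_gt_of_ne hk0 with h5 | h5
    · nlinarith
    · nlinarith
  subst this
  omega

variable {a : Fin 3 → ZMod e}

lemma Rep.rem_res (h : Rep e n T lam) (ha : ∀ s, a s = (n s : ZMod e)) {i : ℤ} (h1 : 1 ≤ i)
    (h2 : i < e) {A : Node 3} (hA : Removable lam A) :
    res a A = (i : ZMod e) ↔ bf (n A.1) (lam A.1) A.2.1 = i := by
  rw [res_rem ha hA]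
  have := h.rem_range hA
  exact ⟨fun hh => cast_inj h1 h2 (by omega) (by omega) hh, fun hh => by rw [hh]⟩

lemma Rep.add_res (h : Rep e n T lam) (ha : ∀ s, a s = (n s : ZMod e)) {i : ℤ} (h1 : 1 ≤ i)
    (h2 : i < e) {A : Node 3} (hA : Addable lam A) :
    res a A = (i : ZMod e) ↔ bf (n A.1) (lam A.1) A.2.1 + 1 = i := by
  rw [res_add ha hA]
  have := h.add_range hA
  exact ⟨fun hh => cast_inj h1 h2 (by omega) (by omega) hh, fun hh => by rw [hh]⟩

lemma Rep.isR_of (h : Rep e n T lam) (ha : ∀ s, a s = (n s : ZMod e)) {i : ℤ} (h1 : 1 ≤ i)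
    (h2 : i < e) {A : Node 3} (hA : Removable lam A) (hr : res a A = (i : ZMod e)) :
    IsR T i A.1 := by
  rw [h.rem_res ha h1 h2 hA] at hr
  have := h.rem_of hA
  rw [hr] at this
  exact ⟨this.2, this.1⟩

lemma Rep.isA_of (h : Rep e n T lam) (ha : ∀ s, a s = (n s : ZMod e)) {i : ℤ} (h1 : 1 ≤ i)
    (h2 : i < e) {A : Node 3} (hA : Addable lam A) (hr : res a A = (i : ZMod e)) :
    IsA T i A.1 := by
  rw [h.add_res ha h1 h2 hA] at hr
  have := h.add_of hA
  rw [hr] at this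
  exact ⟨by rw [← hr]; simpa using this.1, this.2⟩

lemma Rep.ex_rem (h : Rep e n T lam) (ha : ∀ s, a s = (n s : ZMod e)) {i : ℤ} (h1 : 1 ≤ i)
    (h2 : i < e) {s : Fin 3} (hR : IsR T i s) :
    ∃ A : Node 3, A.1 = s ∧ Removable lam A ∧ res a A = (i : ZMod e) := by
  obtain ⟨A, rfl, h4, h5⟩ := h.rem_ex hR.2 hR.1
  exact ⟨A, rfl, h4, (h.rem_res ha h1 h2 h4).2 h5⟩

lemma Rep.ex_add (h : Rep e n T lam) (ha : ∀ s, a s = (n s : ZMod e)) {i : ℤ} (h1 : 1 ≤ i)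
    (h2 : i < e) {s : Fin 3} (hR : IsA T i s) :
    ∃ A : Node 3, A.1 = s ∧ Addable lam A ∧ res a A = (i : ZMod e) := by
  obtain ⟨A, rfl, h4, h5⟩ := h.add_ex hR.1 hR.2
  exact ⟨A, rfl, h4, (h.add_res ha h1 h2 h4).2 h5⟩

/-- Two nodes (addable or removable) of the same residue in the same row of the matrix agree. -/
lemma Rep.node_eq (h : Rep e n T lam) (ha : ∀ s, a s = (n s : ZMod e)) {i : ℤ} (h1 : 1 ≤ i)
    (h2 : i < e) {A C : Node 3} (hA : Removable lam A ∨ Addable lam A)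
    (hC : Removable lam C ∨ Addable lam C) (hrA : res a A = (i : ZMod e))
    (hrC : res a C = (i : ZMod e)) (hs : A.1 = C.1) : A = C := by
  obtain ⟨s, x, y⟩ := A
  obtain ⟨s', x', y'⟩ := C
  simp only at hs
  subst hs
  rcases hA with hA | hA <;> rcases hC with hC | hC
  · have e1 := (h.rem_res ha h1 h2 hA).1 hrA
    have e2 := (h.rem_res ha h1 h2 hC).1 hrC
    have e3 : x = x' := (h.anti s).injective (e1.trans e2.symm)
    subst e3
    have h3 := hA.1
    have h4 := hC.1
    simp only at h3 h4
    have : y = y' := by omega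
    rw [this]
  · have e1 := (h.isR_of ha h1 h2 hA hrA).1
    have e2 := (h.isA_of ha h1 h2 hC hrC).1
    simp only at e1 e2
    rw [e1] at e2; cases e2
  · have e1 := (h.isA_of ha h1 h2 hA hrA).1
    have e2 := (h.isR_of ha h1 h2 hC hrC).1
    simp only at e1 e2
    rw [e1] at e2; cases e2
  · have e1 := (h.add_res ha h1 h2 hA).1 hrA
    have e2 := (h.add_res ha h1 h2 hC).1 hrC
    have e3 : x = x' := (h.anti s).injective (by simp only at e1 e2; omega)
    subst e3
    have h3 := hA.1
    have h4 := hC.1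
    simp only at h3 h4
    have : y = y' := by omega
    rw [this]

lemma Rep.above_iff (h : Rep e n T lam) (ha : ∀ s, a s = (n s : ZMod e)) {i : ℤ} (h1 : 1 ≤ i)
    (h2 : i < e) {A C : Node 3} (hA : Removable lam A ∨ Addable lam A)
    (hC : Removable lam C ∨ Addable lam C) (hrA : res a A = (i : ZMod e))
    (hrC : res a C = (i : ZMod e)) : NodeAbove A C ↔ A.1 < C.1 := by
  constructor
  · rintro (h3 | ⟨h3, h4⟩)
    · exact h3
    · have := h.node_eq ha h1 h2 hA hC hrA hrC h3
      rw [this] at h4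
      exact absurd h4 (lt_irrefl _)
  · exact Or.inl

lemma Rep.ncard_add (h : Rep e n T lam) (ha : ∀ s, a s = (n s : ZMod e)) {i : ℤ} (h1 : 1 ≤ i)
    (h2 : i < e) {A B : Node 3} (hA : Removable lam A ∨ Addable lam A)
    (hB : Removable lam B ∨ Addable lam B) (hrA : res a A = (i : ZMod e))
    (hrB : res a B = (i : ZMod e)) :
    Set.ncard {C : Node 3 | Addable lam C ∧ res a C = (i : ZMod e) ∧ NodeAbove A C ∧ NodeAbove C B}
      = (Finset.univ.filter (fun t => IsA T i t ∧ A.1 < t ∧ t < B.1)).card := by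
  rw [← Set.ncard_coe_finset, ← Set.ncard_image_of_injOn (f := Prod.fst)]
  · congr 1
    ext t
    simp only [Set.mem_image, Set.mem_setOf_eq, Finset.coe_filter, Finset.mem_univ, true_and]
    constructor
    · rintro ⟨C, ⟨c1, c2, c3, c4⟩, rfl⟩
      rw [h.above_iff ha h1 h2 hA (Or.inr c1) hrA c2] at c3
      rw [h.above_iff ha h1 h2 (Or.inr c1) hB c2 hrB] at c4
      exact ⟨h.isA_of ha h1 h2 c1 c2, c3, c4⟩
    · rintro ⟨c1, c2, c3⟩
      obtain ⟨C, rfl, d1, d2⟩ := h.ex_add ha h1 h2 c1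
      exact ⟨C, ⟨d1, d2, Or.inl c2, Or.inl c3⟩, rfl⟩
  · rintro C ⟨c1, c2, -⟩ C' ⟨d1, d2, -⟩ hs
    exact h.node_eq ha h1 h2 (Or.inr c1) (Or.inr d1) c2 d2 hs

lemma Rep.ncard_rem (h : Rep e n T lam) (ha : ∀ s, a s = (n s : ZMod e)) {i : ℤ} (h1 : 1 ≤ i)
    (h2 : i < e) {A B : Node 3} (hA : Removable lam A ∨ Addable lam A)
    (hB : Removable lam B ∨ Addable lam B) (hrA : res a A = (i : ZMod e))
    (hrB : res a B = (i : ZMod e)) :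
    Set.ncard {C : Node 3 | Removable lam C ∧ res a C = (i : ZMod e) ∧ NodeAbove A C ∧
      NodeAbove C B}
      = (Finset.univ.filter (fun t => IsR T i t ∧ A.1 < t ∧ t < B.1)).card := by
  rw [← Set.ncard_coe_finset, ← Set.ncard_image_of_injOn (f := Prod.fst)]
  · congr 1
    ext t
    simp only [Set.mem_image, Set.mem_setOf_eq, Finset.coe_filter, Finset.mem_univ, true_and]
    constructor
    · rintro ⟨C, ⟨c1, c2, c3, c4⟩, rfl⟩
      rw [h.above_iff ha h1 h2 hA (Or.inl c1) hrA c2] at c3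
      rw [h.above_iff ha h1 h2 (Or.inl c1) hB c2 hrB] at c4
      exact ⟨h.isR_of ha h1 h2 c1 c2, c3, c4⟩
    · rintro ⟨c1, c2, c3⟩
      obtain ⟨C, rfl, d1, d2⟩ := h.ex_rem ha h1 h2 c1
      exact ⟨C, ⟨d1, d2, Or.inl c2, Or.inl c3⟩, rfl⟩
  · rintro C ⟨c1, c2, -⟩ C' ⟨d1, d2, -⟩ hs
    exact h.node_eq ha h1 h2 (Or.inl c1) (Or.inl d1) c2 d2 hs

lemma Rep.normal_iff (h : Rep e n T lam) (ha : ∀ s, a s = (n s : ZMod e)) {i : ℤ} (h1 : 1 ≤ i)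
    (h2 : i < e) {A : Node 3} (hA : Removable lam A) (hrA : res a A = (i : ZMod e)) :
    Normal a lam A ↔ NormalRow T i A.1 := by
  unfold Normal NormalRow
  constructor
  · rintro ⟨-, h3⟩
    refine ⟨h.isR_of ha h1 h2 hA hrA, fun s' hs' hlt => ?_⟩
    obtain ⟨B, rfl, b1, b2⟩ := h.ex_add ha h1 h2 hs'
    have := h3 B b1 (b2.trans hrA.symm) (Or.inl hlt)
    rw [hrA, h.ncard_add ha h1 h2 (Or.inl hA) (Or.inr b1) hrA b2,
      h.ncard_rem ha h1 h2 (Or.inl hA) (Or.inr b1) hrA b2] at this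
    exact this
  · rintro ⟨-, h3⟩
    refine ⟨hA, fun B b1 b2 b3 => ?_⟩
    rw [hrA] at b2
    rw [h.above_iff ha h1 h2 (Or.inl hA) (Or.inr b1) hrA b2] at b3
    have := h3 B.1 (h.isA_of ha h1 h2 b1 b2) b3
    rw [hrA, h.ncard_add ha h1 h2 (Or.inl hA) (Or.inr b1) hrA b2,
      h.ncard_rem ha h1 h2 (Or.inl hA) (Or.inr b1) hrA b2]
    exact this

lemma Rep.good_iff (h : Rep e n T lam) (ha : ∀ s, a s = (n s : ZMod e)) {i : ℤ} (h1 : 1 ≤ i)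
    (h2 : i < e) {A : Node 3} (hA : Removable lam A) (hrA : res a A = (i : ZMod e)) :
    Good a lam A ↔ GoodRow T i A.1 := by
  unfold Good GoodRow
  rw [h.normal_iff ha h1 h2 hA hrA]
  refine and_congr_right fun _ => ?_
  constructor
  · intro h3 s' hs' hne
    obtain ⟨B, rfl, b1, b2⟩ := h.ex_rem ha h1 h2 hs'.1
    have := h3 B ((h.normal_iff ha h1 h2 b1 b2).2 hs') (b2.trans hrA.symm)
      (fun hh => hne (by rw [hh]))
    rwa [h.above_iff ha h1 h2 (Or.inl hA) (Or.inl b1) hrA b2] at this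
  · intro h3 B b1 b2 b3
    rw [hrA] at b2
    have b4 := b1.1
    rw [h.normal_iff ha h1 h2 b4 b2] at b1
    refine Or.inl (h3 B.1 b1 fun hh => b3 ?_)
    exact h.node_eq ha h1 h2 (Or.inl b4) (Or.inl hA) b2 hrA hh

end dict
/-! ### Local analysis of two adjacent columns -/

/-- normality of row `s` for a pair of columns `p`, `q`. -/
def NormalL (p q : Fin 3 → Bool) (s : Fin 3) : Prop :=
  (p s = false ∧ q s = true) ∧ ∀ s', (p s' = true ∧ q s' = false) → s < s' →
    (Finset.univ.filter (fun t => (p t = true ∧ q t = false) ∧ s < t ∧ t < s')).card <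
    (Finset.univ.filter (fun t => (p t = false ∧ q t = true) ∧ s < t ∧ t < s')).card

instance (p q : Fin 3 → Bool) (s : Fin 3) : Decidable (NormalL p q s) := by
  unfold NormalL; infer_instance

lemma normalRow_iff (T : Fin 3 → ℤ → Bool) (i : ℤ) (s : Fin 3) :
    NormalRow T i s ↔ NormalL (fun t => T t (i - 1)) (fun t => T t i) s := by
  unfold NormalRow NormalL IsR IsA
  refine and_congr_right fun _ => forall_congr' fun s' => forall_congr' fun _ =>
    forall_congr' fun _ => ?_
  convert Iff.rfl

/-- `f` is dominated by `g` along local monotone paths. -/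
def Dom (f1 f2 g1 g2 : Fin 3 → ℤ) : Prop :=
  ∀ c c' : Fin 3, c ≤ c' → ∃ d d' : Fin 3, c ≤ d ∧ d ≤ d' ∧ d' ≤ c' ∧ f1 c + f2 c' ≤ g1 d + g2 d'

instance (f1 f2 g1 g2 : Fin 3 → ℤ) : Decidable (Dom f1 f2 g1 g2) := by
  unfold Dom; infer_instance

lemma local_key0 : ∀ a b c x y z : Bool, ∀ s : Fin 3,
    NormalL ![a, b, c] ![x, y, z] s → (∀ s', NormalL ![a, b, c] ![x, y, z] s' → s' ≠ s → s < s') →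
    Dom (fun t => v (Function.update ![a, b, c] s true t.rev))
        (fun t => v (Function.update ![x, y, z] s false t.rev))
        (fun t => v (![a, b, c] t.rev)) (fun t => v (![x, y, z] t.rev)) ∧
    Dom (fun t => v (![a, b, c] t.rev)) (fun t => v (![x, y, z] t.rev))
        (fun t => v (Function.update ![a, b, c] s true t.rev))
        (fun t => v (Function.update ![x, y, z] s false t.rev)) ∧
    Dom (fun t => - v (Function.update ![a, b, c] s true t))
        (fun t => - v (Function.update ![x, y, z] s false t))
        (fun t => - v (![a, b, c] t)) (fun t => - v (![x, y, z] t)) ∧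
    Dom (fun t => - v (![a, b, c] t)) (fun t => - v (![x, y, z] t))
        (fun t => - v (Function.update ![a, b, c] s true t))
        (fun t => - v (Function.update ![x, y, z] s false t)) := by
  decide +kernel

lemma local_key (p q : Fin 3 → Bool) (s : Fin 3)
    (h1 : NormalL p q s) (h2 : ∀ s', NormalL p q s' → s' ≠ s → s < s') :
    Dom (fun t => v (Function.update p s true t.rev))
        (fun t => v (Function.update q s false t.rev))
        (fun t => v (p t.rev)) (fun t => v (q t.rev)) ∧
    Dom (fun t => v (p t.rev)) (fun t => v (q t.rev))
        (fun t => v (Function.update p s true t.rev))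
        (fun t => v (Function.update q s false t.rev)) ∧
    Dom (fun t => - v (Function.update p s true t))
        (fun t => - v (Function.update q s false t))
        (fun t => - v (p t)) (fun t => - v (q t)) ∧
    Dom (fun t => - v (p t)) (fun t => - v (q t))
        (fun t => - v (Function.update p s true t))
        (fun t => - v (Function.update q s false t)) := by
  have hp : p = ![p 0, p 1, p 2] := by ext t; fin_cases t <;> rfl
  have hq : q = ![q 0, q 1, q 2] := by ext t; fin_cases t <;> rfl
  rw [hp, hq] at h1 h2 ⊢
  exact local_key0 _ _ _ _ _ _ s h1 h2

/-- Splitting off two columns from a sum. -/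
lemma sum_two {i : ℤ} (h1 : 1 ≤ i) (h2 : i < e) (f : ℤ → ℤ) :
    ∑ j ∈ Finset.Ico (0 : ℤ) e, f j =
      f (i - 1) + f i + ∑ j ∈ ((Finset.Ico (0 : ℤ) e).erase i).erase (i - 1), f j := by
  rw [← Finset.add_sum_erase (Finset.Ico (0 : ℤ) e) f (a := i) (by simp; omega),
    ← Finset.add_sum_erase ((Finset.Ico (0 : ℤ) e).erase i) f (a := i - 1) (by simp; omega)]
  ring

lemma path_dom {i : ℤ} (h1 : 1 ≤ i) (h2 : i < e) (f g : Fin 3 → ℤ → ℤ)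
    (hfg : ∀ t j, j ≠ i → j ≠ i - 1 → f t j = g t j)
    (hd : Dom (fun t => f t (i - 1)) (fun t => f t i) (fun t => g t (i - 1)) (fun t => g t i))
    (r : ℤ → Fin 3) (hr : Monotone r) :
    ∃ r' : ℤ → Fin 3, Monotone r' ∧
      ∑ j ∈ Finset.Ico (0 : ℤ) e, f (r j) j ≤ ∑ j ∈ Finset.Ico (0 : ℤ) e, g (r' j) j := by
  obtain ⟨d, d', k1, k2, k3, k4⟩ := hd (r (i - 1)) (r i) (hr (by omega))
  refine ⟨fun j => if j = i - 1 then d else if j = i then d' else r j, ?_, ?_⟩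
  · intro j j' hj
    have m1 : j ≤ i - 1 → r j ≤ r (i - 1) := fun h => hr h
    have m2 : j ≤ i → r j ≤ r i := fun h => hr h
    have m3 : i - 1 ≤ j' → r (i - 1) ≤ r j' := fun h => hr h
    have m4 : i ≤ j' → r i ≤ r j' := fun h => hr h
    have m5 : r j ≤ r j' := hr hj
    dsimp only
    split_ifs with c1 c2 c3 c4 c5 c6 c7
    · exact le_rfl
    · exact k2
    · exact k2.trans (k3.trans (m4 (by omega)))
    · omega
    · exact le_rfl
    · exact k3.trans (m4 (by omega))
    · exact (m1 (by omega)).trans k1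
    · exact (m1 (by omega)).trans (k1.trans k2)
    · exact m5
  · rw [sum_two h1 h2, sum_two h1 h2]
    have e1 : ¬ (i = i - 1) := by omega
    simp only [if_true, if_neg e1]
    have : ∑ j ∈ ((Finset.Ico (0 : ℤ) e).erase i).erase (i - 1), f (r j) j =
        ∑ j ∈ ((Finset.Ico (0 : ℤ) e).erase i).erase (i - 1),
          g (if j = i - 1 then d else if j = i then d' else r j) j := by
      refine Finset.sum_congr rfl fun j hj => ?_
      simp only [Finset.mem_erase] at hj
      rw [if_neg hj.1, if_neg hj.2.1]
      exact hfg _ _ hj.2.1 hj.1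
    rw [this]
    have k4' : f (r (i - 1)) (i - 1) + f (r i) i ≤ g d (i - 1) + g d' i := k4
    linarith

/-- upper path condition -/
def PMax (e : ℕ) (n : Fin 3 → ℕ) (T : Fin 3 → ℤ → Bool) : Prop :=
  ∀ r : ℤ → Fin 3, Monotone r → ∃ s, ∑ j ∈ Finset.Ico (0 : ℤ) e, v (T (r j).rev j) ≤ n s
/-- lower path condition -/
def PMin (e : ℕ) (n : Fin 3 → ℕ) (T : Fin 3 → ℤ → Bool) : Prop :=
  ∀ r : ℤ → Fin 3, Monotone r → ∃ s, (n s : ℤ) ≤ ∑ j ∈ Finset.Ico (0 : ℤ) e, v (T (r j) j)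

/-- moving a bead from column `i` to column `i-1` in row `s`. -/
def mv (T : Fin 3 → ℤ → Bool) (i : ℤ) (s : Fin 3) : Fin 3 → ℤ → Bool :=
  fun t j => if j = i - 1 then Function.update (fun t => T t (i - 1)) s true t
    else if j = i then Function.update (fun t => T t i) s false t else T t j

lemma mv_sub (T : Fin 3 → ℤ → Bool) (i : ℤ) (s t : Fin 3) :
    mv T i s t (i - 1) = Function.update (fun t => T t (i - 1)) s true t := by
  simp [mv]

lemma mv_self (T : Fin 3 → ℤ → Bool) (i : ℤ) (s t : Fin 3) :
    mv T i s t i = Function.update (fun t => T t i) s false t := by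
  have : ¬ (i = i - 1) := by omega
  simp [mv, this]

lemma mv_other (T : Fin 3 → ℤ → Bool) (i : ℤ) (s t : Fin 3) (j : ℤ) (h1 : j ≠ i)
    (h2 : j ≠ i - 1) : mv T i s t j = T t j := by
  simp [mv, h1, h2]

lemma pmax_mv {n : Fin 3 → ℕ} {T : Fin 3 → ℤ → Bool} {i : ℤ} (h1 : 1 ≤ i) (h2 : i < e)
    {s : Fin 3} (hg : GoodRow T i s) : PMax e n T ↔ PMax e n (mv T i s) := by
  have key := local_key (fun t => T t (i - 1)) (fun t => T t i) s
    ((normalRow_iff T i s).1 hg.1) (fun s' hs' => hg.2 s' ((normalRow_iff T i s').2 hs'))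
  obtain ⟨k1, k2, -, -⟩ := key
  constructor
  · intro h r hr
    obtain ⟨r', hr', hle⟩ := path_dom h1 h2 (fun t j => v (mv T i s t.rev j))
      (fun t j => v (T t.rev j)) (fun t j e1 e2 => by simp only [mv_other T i s _ j e1 e2])
      (by simpa only [mv_sub, mv_self] using k1) r hr
    obtain ⟨s', hs'⟩ := h r' hr'
    exact ⟨s', hle.trans hs'⟩
  · intro h r hr
    obtain ⟨r', hr', hle⟩ := path_dom h1 h2 (fun t j => v (T t.rev j))
      (fun t j => v (mv T i s t.rev j)) (fun t j e1 e2 => by simp only [mv_other T i s _ j e1 e2])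
      (by simpa only [mv_sub, mv_self] using k2) r hr
    obtain ⟨s', hs'⟩ := h r' hr'
    exact ⟨s', hle.trans hs'⟩

lemma pmin_mv {n : Fin 3 → ℕ} {T : Fin 3 → ℤ → Bool} {i : ℤ} (h1 : 1 ≤ i) (h2 : i < e)
    {s : Fin 3} (hg : GoodRow T i s) : PMin e n T ↔ PMin e n (mv T i s) := by
  have key := local_key (fun t => T t (i - 1)) (fun t => T t i) s
    ((normalRow_iff T i s).1 hg.1) (fun s' hs' => hg.2 s' ((normalRow_iff T i s').2 hs'))
  obtain ⟨-, -, k1, k2⟩ := key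
  constructor
  · intro h r hr
    obtain ⟨r', hr', hle⟩ := path_dom h1 h2 (fun t j => - v (mv T i s t j))
      (fun t j => - v (T t j)) (fun t j e1 e2 => by simp only [mv_other T i s _ j e1 e2])
      (by simpa only [mv_sub, mv_self] using k1) r hr
    obtain ⟨s', hs'⟩ := h r' hr'
    simp only [Finset.sum_neg_distrib] at hle
    exact ⟨s', by linarith⟩
  · intro h r hr
    obtain ⟨r', hr', hle⟩ := path_dom h1 h2 (fun t j => - v (T t j))
      (fun t j => - v (mv T i s t j)) (fun t j e1 e2 => by simp only [mv_other T i s _ j e1 e2])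
      (by simpa only [mv_sub, mv_self] using k2) r hr
    obtain ⟨s', hs'⟩ := h r' hr'
    simp only [Finset.sum_neg_distrib] at hle
    exact ⟨s', by linarith⟩

/-! ### Configurations without normal nodes -/

lemma downset {D : ℤ → Prop} (hd : ∀ i, D i → D (i - 1)) (hn : ∀ i, i < 0 → D i)
    (hh : ∀ i, (e : ℤ) ≤ i → ¬ D i) : ∃ p : ℤ, 0 ≤ p ∧ p ≤ e ∧ ∀ i, D i ↔ i < p := by
  obtain ⟨p, hp, hmin⟩ := Int.exists_least_of_bdd (P := fun p => 0 ≤ p ∧ ¬ D p)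
    ⟨0, fun z hz => hz.1⟩ ⟨e, by omega, hh _ le_rfl⟩
  have hup : ∀ k : ℕ, ¬ D (p + k) := by
    intro k
    induction k with
    | zero => simpa using hp.2
    | succ k ih =>
      intro hD
      apply ih
      have := hd _ hD
      push_cast at this
      rwa [show p + ((k : ℤ) + 1) - 1 = p + k by ring] at this
  refine ⟨p, hp.1, hmin e ⟨by omega, hh _ le_rfl⟩, fun i => ⟨fun hD => ?_, fun hi => ?_⟩⟩
  · by_contra hc
    have := hup (i - p).toNat
    rw [show p + ((i - p).toNat : ℤ) = i by omega] at this
    exact this hD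
  · by_contra hc
    by_cases h0 : i < 0
    · exact hc (hn i h0)
    · have := hmin i ⟨by omega, hc⟩
      omega

lemma sum_lt {m : ℤ} (h0 : 0 ≤ m) (h1 : m ≤ e) :
    ∑ j ∈ Finset.Ico (0 : ℤ) e, v (decide (j < m)) = m := by
  have : ∀ j, v (decide (j < m)) = if j < m then (1 : ℤ) else 0 := by
    intro j; simp [v]
  simp only [this]
  rw [← Finset.sum_filter]
  have h2 : (Finset.Ico (0 : ℤ) e).filter (fun j => j < m) = Finset.Ico 0 m := by
    ext j; simp; omega
  rw [h2]; simp; omega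

lemma v_le {a b : Bool} (h : a = true → b = true) : v a ≤ v b := by
  cases a <;> cases b <;> simp_all [v]

lemma eq_of_sum {A B : ℤ → Bool} (h : ∀ j, A j = true → B j = true)
    (hs : ∑ j ∈ Finset.Ico (0 : ℤ) e, v (B j) ≤ ∑ j ∈ Finset.Ico (0 : ℤ) e, v (A j))
    (j : ℤ) (h0 : 0 ≤ j) (h1 : j < e) : A j = B j := by
  have h2 := (Finset.sum_eq_sum_iff_of_le (s := Finset.Ico (0 : ℤ) e)
    (f := fun j => v (A j)) (g := fun j => v (B j)) (fun j _ => v_le (h j))).1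
    (le_antisymm (Finset.sum_le_sum fun j _ => v_le (h j)) hs) j (by simp; omega)
  revert h2
  cases A j <;> cases B j <;> simp [v]

lemma gen0 : ∀ a b c x y z : Bool, (∀ s, ¬ NormalL ![a, b, c] ![x, y, z] s) →
      (z = true → c = true) ∧ (y = true → b = true ∨ (c = true ∧ z = false)) ∧
      (x = true → a = true ∨ (b = true ∧ y = false) ∨ (c = true ∧ z = false)) := by
  decide +kernel

lemma gen1 : ∀ a b c x y z : Bool, (∀ s, ¬ NormalL ![a, b, c] ![x, y, z] s) →
      (∀ s t w : Fin 3, (s ≠ t ∧ s ≠ w ∧ t ≠ w ∧ ![a, b, c] s = true ∧ ![x, y, z] s = true ∧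
        ![a, b, c] t = false ∧ ![x, y, z] t = false ∧ ![x, y, z] w = true) →
        ![a, b, c] w = true) := by
  decide +kernel

lemma gen (p q : Fin 3 → Bool) (h : ∀ s, ¬ NormalL p q s) :
      (q 2 = true → p 2 = true) ∧ (q 1 = true → p 1 = true ∨ (p 2 = true ∧ q 2 = false)) ∧
      (q 0 = true → p 0 = true ∨ (p 1 = true ∧ q 1 = false) ∨ (p 2 = true ∧ q 2 = false)) ∧
      (∀ s t w : Fin 3, (s ≠ t ∧ s ≠ w ∧ t ≠ w ∧ p s = true ∧ q s = true ∧ p t = false ∧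
        q t = false ∧ q w = true) → p w = true) := by
  have hp : p = ![p 0, p 1, p 2] := by ext t; fin_cases t <;> rfl
  have hq : q = ![q 0, q 1, q 2] := by ext t; fin_cases t <;> rfl
  rw [hp, hq] at h
  have k1 := gen0 _ _ _ _ _ _ h
  have k2 := gen1 _ _ _ _ _ _ h
  rw [← hp, ← hq] at k2
  exact ⟨k1.1, k1.2.1, k1.2.2, k2⟩

lemma hw_initial {n : Fin 3 → ℕ} {T : Fin 3 → ℤ → Bool}
    (neg : ∀ s b, b < 0 → T s b = true)
    (hi : ∀ s b, (e : ℤ) ≤ b → T s b = false)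
    (cnt : ∀ s, ∑ i ∈ Finset.Ico (0 : ℤ) e, v (T s i) = n s)
    (hno : ∀ i s, 1 ≤ i → i < (e : ℤ) → ¬ NormalRow T i s)
    (h1 : PMax e n T) (h2 : PMin e n T) (s : Fin 3) (b : ℤ) : T s b = true ↔ b < n s := by
  have hno' : ∀ i s, ¬ NormalL (fun t => T t (i - 1)) (fun t => T t i) s := by
    intro i s hN
    by_cases c1 : 1 ≤ i
    · by_cases c2 : i < e
      · exact hno i s c1 c2 ((normalRow_iff T i s).2 hN)
      · have := hN.1.2
        simp only [hi s i (by omega)] at this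
        cases this
    · have := hN.1.1
      simp only [neg s (i - 1) (by omega)] at this
      cases this
  have gen' := fun i => gen _ _ (hno' i)
  have H2 := fun i => (gen' i).1
  have H1 := fun i => (gen' i).2.1
  have H0 := fun i => (gen' i).2.2.1
  have HS := fun i => (gen' i).2.2.2
  clear gen' hno'
  obtain ⟨p, hp0, hpe, hp⟩ := downset (e := e) (D := fun i => T 2 i = true) H2 (neg 2)
    (fun i hh => by simp [hi 2 i hh])
  have hp' : ∀ i, T 2 i = false ↔ p ≤ i := fun i => by
    rw [← not_lt, ← hp i]; simp
  -- the covering path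
  obtain ⟨q, hq0, hqe, hq⟩ := downset (e := e) (D := fun i => i < p ∨ T 1 i = true)
    (by
      rintro i (hh | hh)
      · left; omega
      · rcases H1 i hh with h | ⟨h, -⟩
        · right; exact h
        · left; exact (hp _).1 h)
    (fun i hh => Or.inr (neg 1 i hh))
    (by
      rintro i hh (h | h)
      · omega
      · rw [hi 1 i hh] at h; cases h)
  obtain ⟨m, hm0, hme, hm⟩ := downset (e := e) (D := fun i => i < q ∨ T 0 i = true)
    (by
      rintro i (hh | hh)
      · left; omega
      · rcases H0 i hh with h | ⟨h, -⟩ | ⟨h, -⟩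
        · right; exact h
        · left; exact (hq _).1 (Or.inr h)
        · left; exact (hq _).1 (Or.inl ((hp _).1 h)))
    (fun i hh => Or.inr (neg 0 i hh))
    (by
      rintro i hh (h | h)
      · omega
      · rw [hi 0 i hh] at h; cases h)
  have hpq : p ≤ q := by
    by_contra hc
    have := (hq q).1 (Or.inl (by omega))
    omega
  have hqm : q ≤ m := by
    by_contra hc
    have := (hm m).1 (Or.inl (by omega))
    omega
  have hcov : ∀ t i, T t i = true → i < m := by
    intro t i ht
    fin_cases t
    · exact (hm i).1 (Or.inr ht)
    · have := (hq i).1 (Or.inr ht); omega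
    · have := (hp i).1 ht; omega
  obtain ⟨s1, hs1⟩ := h1 (fun i => if i < p then 0 else if i < q then 1 else 2) (by
    intro i j hij
    dsimp only
    split_ifs <;> omega)
  have e1 : ∀ i, T (Fin.rev (if i < p then (0 : Fin 3) else if i < q then 1 else 2)) i
      = decide (i < m) := by
    intro i
    split_ifs with c1 c2
    · have : T 2 i = true := (hp i).2 c1
      rw [show Fin.rev (0 : Fin 3) = 2 from rfl, this]
      have : i < m := by omega
      simp [this]
    · rw [show Fin.rev (1 : Fin 3) = 1 from rfl]
      have : T 1 i = true := by
        rcases (hq i).2 c2 with h | h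
        · omega
        · exact h
      rw [this]
      have : i < m := by omega
      simp [this]
    · rw [show Fin.rev (2 : Fin 3) = 0 from rfl]
      have := hm i
      by_cases c3 : i < m
      · simp only [c3, iff_true, c2, false_or] at this
        simp [this, c3]
      · simp only [c3, iff_false, not_or] at this
        simp [this.2, c3]
  simp only [e1] at hs1
  rw [← cnt s1] at hs1
  have r1 := fun j => eq_of_sum (A := T s1) (B := fun j => decide (j < m))
    (fun j hj => by simpa using hcov s1 j hj) hs1 j
  -- the avoiding path
  obtain ⟨q', hq0', hqe', hq'⟩ := downset (e := e) (D := fun i => i < p ∧ T 1 i = true)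
    (by
      rintro i ⟨hh, hh'⟩
      rcases H1 i hh' with h | ⟨h, h3⟩
      · exact ⟨by omega, h⟩
      · rw [hp'] at h3; omega)
    (fun i hh => ⟨by omega, neg 1 i hh⟩)
    (by rintro i hh ⟨h, -⟩; omega)
  obtain ⟨m', hm0', hme', hm'⟩ := downset (e := e) (D := fun i => i < q' ∧ T 0 i = true)
    (by
      rintro i ⟨hh, hh'⟩
      rcases H0 i hh' with h | ⟨h, h3⟩ | ⟨h, h3⟩
      · exact ⟨by omega, h⟩
      · have := ((hq' i).2 hh).2
        rw [h3] at this; cases this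
      · rw [hp'] at h3
        have := ((hq' i).2 hh).1
        omega)
    (fun i hh => ⟨by omega, neg 0 i hh⟩)
    (by rintro i hh ⟨h, -⟩; omega)
  have hqp' : q' ≤ p := by
    by_contra hc
    have := ((hq' p).2 (by omega)).1
    omega
  have hmq' : m' ≤ q' := by
    by_contra hc
    have := ((hm' q').2 (by omega)).1
    omega
  have hcov' : ∀ t i, i < m' → T t i = true := by
    intro t i ht
    fin_cases t
    · exact ((hm' i).2 ht).2
    · exact ((hq' i).2 (by omega)).2
    · exact (hp i).2 (by omega)
  obtain ⟨s2, hs2⟩ := h2 (fun i => if i < q' then 0 else if i < p then 1 else 2) (by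
    intro i j hij
    dsimp only
    split_ifs <;> omega)
  have e2 : ∀ i, T (if i < q' then (0 : Fin 3) else if i < p then 1 else 2) i
      = decide (i < m') := by
    intro i
    split_ifs with c1 c2
    · have := hm' i
      by_cases c3 : i < m'
      · simp only [c3, iff_true] at this
        simp [this, c3]
      · simp only [c3, iff_false, c1, true_and] at this
        simp [this, c3]
    · have := hq' i
      simp only [c1, c2, iff_false, true_and] at this
      have c3 : ¬ i < m' := by omega
      simp [this, c3]
    · have := (hp' i).2 (by omega)
      have c3 : ¬ i < m' := by omega
      simp [this, c3]
  simp only [e2] at hs2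
  rw [← cnt s2] at hs2
  have r2 := fun j => eq_of_sum (A := fun j => decide (j < m')) (B := T s2)
    (fun j hj => hcov' s2 j (by simpa using hj)) hs2 j
  -- all rows are initial
  have hrow : ∀ w i, T w i = true → T w (i - 1) = true := by
    intro w i hw
    by_contra hc
    have hc' : T w (i - 1) = false := by simpa using hc
    have a1 := hcov w i hw
    have a2 : m' ≤ i - 1 := by
      by_contra hc2
      exact hc (hcov' w (i - 1) (by omega))
    have b1 : T s1 (i - 1) = true := by rw [r1 _ (by omega) (by omega)]; simp; omega
    have b2 : T s1 i = true := by rw [r1 _ (by omega) (by omega)]; simp; omega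
    have b3 : T s2 (i - 1) = false := by rw [← r2 _ (by omega) (by omega)]; simp; omega
    have b4 : T s2 i = false := by rw [← r2 _ (by omega) (by omega)]; simp; omega
    refine hc (HS i s1 s2 w ⟨?_, ?_, ?_, b1, b2, b3, b4, hw⟩)
    · rintro rfl; rw [b1] at b3; cases b3
    · rintro rfl; rw [b1] at hc'; cases hc'
    · rintro rfl; rw [b4] at hw; cases hw
  obtain ⟨x, hx0, hxe, hx⟩ := downset (e := e) (D := fun i => T s i = true) (hrow s) (neg s)
    (fun i hh => by simp [hi s i hh])
  have : x = n s := by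
    rw [← cnt s, ← sum_lt hx0 hxe]
    refine Finset.sum_congr rfl fun j _ => ?_
    congr 1
    rw [Bool.eq_iff_iff]
    simp [hx j]
  rw [← this]; exact hx b

/-! ### The general criterion -/

section crit
variable {n : Fin 3 → ℕ} {T : Fin 3 → ℤ → Bool} {lam : Fin 3 → ℕ → ℕ} {a : Fin 3 → ZMod e}

lemma mv_row_ne {i : ℤ} {s t : Fin 3} (h : t ≠ s) (j : ℤ) : mv T i s t j = T t j := by
  unfold mv
  split_ifs with h1 h2
  · rw [Function.update_of_ne h, h1]
  · rw [Function.update_of_ne h, h2]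
  · rfl

lemma Rep.mv (h : Rep e n T lam) {A : Node 3} (hA : Removable lam A) {i : ℤ}
    (hi : bf (n A.1) (lam A.1) A.2.1 = i) : Rep e n (mv T i A.1) (removeNode lam A) := by
  have hr := h.rem_range hA
  have hT := h.rem_of hA
  rw [hi] at hr hT
  obtain ⟨s, x, y⟩ := A
  simp only at hi hr hT
  have hrow : ∀ t, t ≠ s → removeNode lam (s, x, y) t = lam t := by
    intro t ht
    ext x'
    simp [removeNode, ht]
  have hbf : ∀ x', bf (n s) (removeNode lam (s, x, y) s) x' =
      if x' = x then i - 1 else bf (n s) (lam s) x' := by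
    intro x'
    have h1 := hA.1
    simp only at h1
    unfold bf removeNode
    split_ifs with c1 c2 c2
    · subst c2
      unfold bf at hi
      rw [← hi]
      have : 1 ≤ lam s x' := by omega
      push_cast [this]
      ring
    · exact absurd c1.2 c2
    · exact absurd ⟨rfl, c2⟩ c1
    · rfl
  have hlow : ∀ x', x < x' → bf (n s) (lam s) x' < i - 1 := by
    intro x' hx
    have h1 : bf (n s) (lam s) x' < i := by rw [← hi]; exact h.anti s hx
    have h2 : bf (n s) (lam s) x' ≠ i - 1 := by
      intro h3
      have := (h.rng s (i - 1)).2 ⟨_, h3⟩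
      rw [hT.2] at this; cases this
    omega
  have hup : ∀ x', x' < x → i < bf (n s) (lam s) x' := by
    intro x' hx
    rw [← hi]; exact h.anti s hx
  refine ⟨?_, ?_, ?_, ?_, ?_⟩
  · intro t
    by_cases ht : t = s
    · subst ht
      intro x1 x2 h12
      rw [hbf, hbf]
      split_ifs with c1 c2 c2
      · omega
      · have := hup x2
        have := hup x1 (by omega)
        omega
      · exact hlow x2 (by omega)
      · exact h.anti t h12
    · rw [hrow t ht]; exact h.anti t
  · intro t b
    by_cases ht : t = s
    · subst ht
      simp only [hbf]
      by_cases c1 : b = i - 1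
      · subst c1
        rw [mv_sub]
        simp only [Function.update_self, true_iff]
        exact ⟨x, by simp⟩
      · by_cases c2 : b = i
        · subst c2
          rw [mv_self]
          simp only [Function.update_self, Bool.false_eq_true, false_iff]
          rintro ⟨x', hx'⟩
          split_ifs at hx' with c3
          · omega
          · exact c3 ((h.anti t).injective (hx'.trans hi.symm))
        · rw [mv_other T i t t b c2 c1, h.rng]
          constructor
          · rintro ⟨x', hx'⟩
            refine ⟨x', ?_⟩
            rw [if_neg, hx']
            rintro rfl
            exact c2 (hx'.symm.trans hi)
          · rintro ⟨x', hx'⟩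
            split_ifs at hx' with c3
            · omega
            · exact ⟨x', hx'⟩
    · rw [mv_row_ne ht, hrow t ht, h.rng]
  · intro t b hb
    rw [mv_other T i s t b (by omega) (by omega), h.neg t b hb]
  · intro t b hb
    rw [mv_other T i s t b (by omega) (by omega), h.hi t b hb]
  · intro t
    by_cases ht : t = s
    · subst ht
      rw [← h.cnt t, sum_two hr.1 hr.2, sum_two hr.1 hr.2]
      rw [mv_sub, mv_self, hT.1, hT.2]
      simp only [Function.update_self]
      have : ∑ j ∈ ((Finset.Ico (0 : ℤ) e).erase i).erase (i - 1), v (AK.mv T i t t j) =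
          ∑ j ∈ ((Finset.Ico (0 : ℤ) e).erase i).erase (i - 1), v (T t j) := by
        refine Finset.sum_congr rfl fun j hj => ?_
        simp only [Finset.mem_erase] at hj
        rw [mv_other T i t t j hj.2.1 hj.1]
      rw [this]
      simp [v]
    · simp only [mv_row_ne ht]
      exact h.cnt t

lemma Rep.initial_of_zero (h : Rep e n T (fun _ _ => 0)) (s : Fin 3) (b : ℤ) :
    T s b = true ↔ b < n s := by
  rw [h.rng]
  simp only [bf]
  constructor
  · rintro ⟨x, hx⟩; push_cast at hx; omega
  · intro hb
    exact ⟨((n s : ℤ) - 1 - b).toNat, by push_cast; omega⟩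

lemma Rep.zero_of_initial (h : Rep e n T lam) (hT : ∀ s b, T s b = true ↔ b < n s) :
    lam = fun _ _ => 0 := by
  funext s x
  have h1 : ∀ x : ℕ, bf (n s) (lam s) x ≤ n s - 1 - x := by
    intro x
    induction x with
    | zero =>
      have := (hT s _).1 ((h.rng s _).2 ⟨0, rfl⟩)
      push_cast; omega
    | succ x ih =>
      have : bf (n s) (lam s) (x + 1) < bf (n s) (lam s) x := h.anti s (Nat.lt_succ_self x)
      push_cast; omega
  have := h1 x
  unfold bf at this
  omega

lemma pmax_initial (hcnt : ∀ s, ∑ i ∈ Finset.Ico (0 : ℤ) e, v (T s i) = n s)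
    (hT : ∀ s b, T s b = true ↔ b < n s) : PMax e n T := by
  intro r _
  obtain ⟨s, -, hs⟩ := Finset.exists_max_image Finset.univ n ⟨0, Finset.mem_univ _⟩
  refine ⟨s, ?_⟩
  rw [← hcnt s]
  refine Finset.sum_le_sum fun j _ => v_le fun hj => ?_
  rw [hT] at hj ⊢
  have := hs (r j).rev (Finset.mem_univ _)
  omega

lemma pmin_initial (hcnt : ∀ s, ∑ i ∈ Finset.Ico (0 : ℤ) e, v (T s i) = n s)
    (hT : ∀ s b, T s b = true ↔ b < n s) : PMin e n T := by
  intro r _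
  obtain ⟨s, -, hs⟩ := Finset.exists_min_image Finset.univ n ⟨0, Finset.mem_univ _⟩
  refine ⟨s, ?_⟩
  rw [← hcnt s]
  refine Finset.sum_le_sum fun j _ => v_le fun hj => ?_
  rw [hT] at hj ⊢
  have := hs (r j) (Finset.mem_univ _)
  omega

lemma good_bead (h : Rep e n T lam) (ha : ∀ s, a s = (n s : ZMod e)) {A : Node 3}
    (hA : Good a lam A) : ∃ i : ℤ, 1 ≤ i ∧ i < e ∧ bf (n A.1) (lam A.1) A.2.1 = i ∧
      GoodRow T i A.1 := by
  have hR := hA.1.1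
  have hr := h.rem_range hR
  exact ⟨_, hr.1, hr.2, rfl, (h.good_iff ha hr.1 hr.2 hR (res_rem ha hR)).1 hA⟩

lemma kl_imp (ha : ∀ s, a s = (n s : ZMod e)) (hk : IsKleshchev a lam) :
    ∀ T, Rep e n T lam → PMax e n T ∧ PMin e n T := by
  induction hk with
  | empty =>
    intro T h
    exact ⟨pmax_initial h.cnt h.initial_of_zero, pmin_initial h.cnt h.initial_of_zero⟩
  | step lam A hA _ ih =>
    intro T h
    obtain ⟨i, h1, h2, h3, h4⟩ := good_bead h ha hA
    have := ih _ (h.mv hA.1.1 h3)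
    rwa [← pmax_mv h1 h2 h4, ← pmin_mv h1 h2 h4] at this

/-- a measure that drops when a node is removed -/
def meas (e : ℕ) (T : Fin 3 → ℤ → Bool) : ℤ :=
  ∑ s, ∑ j ∈ Finset.Ico (0 : ℤ) e, j * v (T s j)

lemma meas_nonneg : 0 ≤ meas e T := by
  refine Finset.sum_nonneg fun s _ => Finset.sum_nonneg fun j hj => ?_
  simp only [Finset.mem_Ico] at hj
  refine mul_nonneg hj.1 ?_
  unfold v; split_ifs <;> norm_num

lemma meas_mv {i : ℤ} {s : Fin 3} (h1 : 1 ≤ i) (h2 : i < e) (hR : IsR T i s) :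
    meas e (mv T i s) < meas e T := by
  have hother : ∀ t, t ≠ s → ∑ j ∈ Finset.Ico (0 : ℤ) e, j * v (mv T i s t j) =
      ∑ j ∈ Finset.Ico (0 : ℤ) e, j * v (T t j) := by
    intro t ht
    simp only [mv_row_ne ht]
  have hs : ∑ j ∈ Finset.Ico (0 : ℤ) e, j * v (mv T i s s j) <
      ∑ j ∈ Finset.Ico (0 : ℤ) e, j * v (T s j) := by
    rw [sum_two h1 h2, sum_two h1 h2, mv_sub, mv_self, hR.1, hR.2]
    simp only [Function.update_self]
    have : ∑ j ∈ ((Finset.Ico (0 : ℤ) e).erase i).erase (i - 1), j * v (AK.mv T i s s j) =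
        ∑ j ∈ ((Finset.Ico (0 : ℤ) e).erase i).erase (i - 1), j * v (T s j) := by
      refine Finset.sum_congr rfl fun j hj => ?_
      simp only [Finset.mem_erase] at hj
      rw [mv_other T i s s j hj.2.1 hj.1]
    rw [this]
    simp [v]
  refine Finset.sum_lt_sum (fun t _ => ?_) ⟨s, Finset.mem_univ _, hs⟩
  by_cases ht : t = s
  · subst ht; exact hs.le
  · exact (hother t ht).le

lemma exists_good {i : ℤ} (h : ∃ s, NormalRow T i s) : ∃ s, GoodRow T i s := by
  obtain ⟨s, hs, hmin⟩ := wellFounded_lt.has_min {s : Fin 3 | NormalRow T i s} h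
  refine ⟨s, hs, fun s' hs' hne => ?_⟩
  have := hmin s' hs'
  exact lt_of_le_of_ne (not_lt.1 this) (Ne.symm hne)

lemma imp_kl (ha : ∀ s, a s = (n s : ZMod e)) : ∀ (N : ℕ) (T : Fin 3 → ℤ → Bool)
    (lam : Fin 3 → ℕ → ℕ), (meas e T).toNat ≤ N → Rep e n T lam → PMax e n T → PMin e n T →
    IsKleshchev a lam := by
  intro N
  induction N using Nat.strong_induction_on with
  | _ N ih =>
    intro T lam hN h p1 p2
    by_cases hno : ∀ i s, 1 ≤ i → i < (e : ℤ) → ¬ NormalRow T i s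
    · have := h.zero_of_initial (hw_initial h.neg h.hi h.cnt hno p1 p2)
      rw [this]
      exact IsKleshchev.empty
    · push Not at hno
      obtain ⟨i, s', h1, h2, h3⟩ := hno
      obtain ⟨s, hs⟩ := exists_good ⟨s', h3⟩
      obtain ⟨A, rfl, hA, hres⟩ := h.ex_rem ha h1 h2 hs.1.1
      refine IsKleshchev.step lam A ((h.good_iff ha h1 h2 hA hres).2 hs) ?_
      have hm := meas_mv h1 h2 hs.1.1
      have hm0 : 0 ≤ meas e (mv T i A.1) := meas_nonneg
      refine ih (meas e (mv T i A.1)).toNat (by omega) (mv T i A.1) _ le_rfl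
        (h.mv hA ((h.rem_res ha h1 h2 hA).1 hres)) ?_ ?_
      · rwa [← pmax_mv h1 h2 hs]
      · rwa [← pmin_mv h1 h2 hs]

theorem kl_iff (ha : ∀ s, a s = (n s : ZMod e)) (h : Rep e n T lam) :
    IsKleshchev a lam ↔ PMax e n T ∧ PMin e n T :=
  ⟨fun hk => kl_imp ha hk T h, fun hp => imp_kl ha _ T lam le_rfl h hp.1 hp.2⟩

end crit
/-! ### The multipartition `Pt(0,M)` -/

section enum
variable {T : Set ℤ}

lemma sSup_max {S : Set ℤ} (hne : S.Nonempty) (hb : BddAbove S) : sSup S ∈ S ∧ ∀ b ∈ S, b ≤ sSup S :=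
  ⟨Int.csSup_mem hne hb, fun _ hx => le_csSup hb hx⟩

lemma tEnum_succ (hneg : ∀ b : ℤ, b < 0 → b ∈ T) (x : ℕ) :
    tEnum T (x + 1) ∈ T ∧ tEnum T (x + 1) < tEnum T x ∧
      ∀ b ∈ T, b < tEnum T x → b ≤ tEnum T (x + 1) := by
  have := sSup_max (S := T ∩ Set.Iio (tEnum T x))
    ⟨min (-1) (tEnum T x - 1), hneg _ (by omega), by simp only [Set.mem_Iio]; omega⟩
    ⟨tEnum T x, fun b hb => le_of_lt hb.2⟩
  exact ⟨this.1.1, this.1.2, fun b hb hlt => this.2 b ⟨hb, hlt⟩⟩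

lemma tEnum_zero (hneg : ∀ b : ℤ, b < 0 → b ∈ T) (hhi : ∀ b : ℤ, (e : ℤ) ≤ b → b ∉ T) :
    tEnum T 0 ∈ T ∧ ∀ b ∈ T, b ≤ tEnum T 0 := by
  refine sSup_max ⟨-1, hneg _ (by omega)⟩ ⟨e, fun b hb => ?_⟩
  by_contra hc
  exact hhi b (by omega) hb

lemma tEnum_anti (hneg : ∀ b : ℤ, b < 0 → b ∈ T) : StrictAnti (tEnum T) :=
  strictAnti_nat_of_succ_lt fun x => (tEnum_succ hneg x).2.1

lemma tEnum_mem (hneg : ∀ b : ℤ, b < 0 → b ∈ T) (hhi : ∀ b : ℤ, (e : ℤ) ≤ b → b ∉ T) (x : ℕ) :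
    tEnum T x ∈ T := by
  cases x with
  | zero => exact (tEnum_zero hneg hhi).1
  | succ x => exact (tEnum_succ hneg x).1

lemma tEnum_surj (hneg : ∀ b : ℤ, b < 0 → b ∈ T) (hhi : ∀ b : ℤ, (e : ℤ) ≤ b → b ∉ T) {b : ℤ}
    (hb : b ∈ T) : ∃ x, tEnum T x = b := by
  have hle : ∀ x : ℕ, tEnum T x ≤ tEnum T 0 - x := by
    intro x
    induction x with
    | zero => simp
    | succ x ih =>
      have := (tEnum_succ hneg x).2.1
      push_cast; omega
  have hex : ∃ x, tEnum T x ≤ b := ⟨(tEnum T 0 - b).toNat, by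
    have := hle (tEnum T 0 - b).toNat
    omega⟩
  refine ⟨Nat.find hex, ?_⟩
  have h1 := Nat.find_spec hex
  refine le_antisymm h1 ?_
  rcases hx : Nat.find hex with _ | x
  · exact (tEnum_zero hneg hhi).2 b hb
  · refine (tEnum_succ hneg x).2.2 b hb ?_
    have := Nat.find_min hex (m := x) (by omega)
    omega

lemma tEnum_bound (hneg : ∀ b : ℤ, b < 0 → b ∈ T) (hhi : ∀ b : ℤ, (e : ℤ) ≤ b → b ∉ T) (x : ℕ) :
    (((Finset.Ico (0 : ℤ) e).filter (fun b => b ∈ T)).card : ℤ) ≤ tEnum T x + (x + 1) := by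
  have himg : (Finset.range (x + 1)).image (tEnum T) =
      (Finset.Ico (tEnum T x) e).filter (fun b => b ∈ T) := by
    ext b
    simp only [Finset.mem_image, Finset.mem_range, Finset.mem_filter, Finset.mem_Ico]
    constructor
    · rintro ⟨x', hx', rfl⟩
      refine ⟨⟨(tEnum_anti hneg).antitone (by omega), ?_⟩, tEnum_mem hneg hhi x'⟩
      by_contra hc
      exact hhi _ (by omega) (tEnum_mem hneg hhi x')
    · rintro ⟨⟨h1, h2⟩, h3⟩
      obtain ⟨x', rfl⟩ := tEnum_surj hneg hhi h3
      exact ⟨x', by have := (tEnum_anti hneg).le_iff_ge.1 h1; omega, rfl⟩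
  have hcard := congrArg Finset.card himg
  rw [Finset.card_image_of_injective _ (tEnum_anti hneg).injective, Finset.card_range] at hcard
  by_cases h0 : 0 ≤ tEnum T x
  · have hsub : (Finset.Ico (0 : ℤ) e).filter (fun b => b ∈ T) ⊆
        (Finset.Ico (tEnum T x) e).filter (fun b => b ∈ T) ∪ Finset.Ico 0 (tEnum T x) := by
      intro b
      simp only [Finset.mem_union, Finset.mem_filter, Finset.mem_Ico]
      rintro ⟨⟨h1, h2⟩, h3⟩
      by_cases h4 : b < tEnum T x
      · exact Or.inr ⟨h1, h4⟩
      · exact Or.inl ⟨⟨by omega, h2⟩, h3⟩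
    have h5 := (Finset.card_le_card hsub).trans (Finset.card_union_le _ _)
    rw [← hcard, Int.card_Ico] at h5
    omega
  · have hsub : (Finset.Ico (0 : ℤ) e).filter (fun b => b ∈ T) ∪ Finset.Ico (tEnum T x) 0 ⊆
        (Finset.Ico (tEnum T x) e).filter (fun b => b ∈ T) := by
      intro b
      simp only [Finset.mem_union, Finset.mem_filter, Finset.mem_Ico]
      rintro (⟨⟨h1, h2⟩, h3⟩ | ⟨h1, h2⟩)
      · exact ⟨⟨by omega, h2⟩, h3⟩
      · exact ⟨⟨h1, by omega⟩, hneg b h2⟩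
    have h5 := Finset.card_le_card hsub
    rw [← hcard, Finset.card_union_of_disjoint, Int.card_Ico] at h5
    · omega
    · rw [Finset.disjoint_left]
      intro b
      simp only [Finset.mem_filter, Finset.mem_Ico]
      omega

end enum

/-- The bead configuration of a matrix. -/
def TM (M : Fin 3 → Fin e → Bool) (s : Fin 3) (b : ℤ) : Bool :=
  if b < 0 then true else if h : b.toNat < e then M s ⟨b.toNat, h⟩ else false

lemma rank_zero (i : Fin e) : rank (fun _ => 0) i = i := by
  apply Fin.ext
  simp only [rank, prec, lt_irrefl, true_and, false_or]
  have : (Finset.univ.filter (fun j : Fin e => j < i)) = Finset.Iio i := by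
    ext j; simp
  rw [show (Finset.univ.filter (fun j : Fin e => j < i)).card = (Finset.Iio i).card by
    rw [← this]]
  exact Fin.card_Iio i

lemma beads_zero (M : Fin 3 → Fin e → Bool) (s : Fin 3) (i : Fin e) :
    beads (fun _ => 0) M s i = if M s i then 1 else 0 := by
  simp [beads, rank_zero]

lemma Tset_zero (M : Fin 3 → Fin e → Bool) (s : Fin 3) (b : ℤ) :
    b ∈ Tset (fun _ => 0) M s ↔ TM M s b = true := by
  have : b ∈ Tset (fun _ => 0) M s ↔ b < 0 ∨ (0 ≤ b ∧ ∃ h : b.toNat % e < e,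
      b.toNat / e < beads (fun _ => 0) M s ⟨b.toNat % e, h⟩) := Iff.rfl
  rw [this]
  unfold TM
  by_cases h0 : b < 0
  · simp [h0]
  · simp only [h0, false_or, if_false, beads_zero]
    by_cases h1 : b.toNat < e
    · have h2 : b.toNat % e = b.toNat := Nat.mod_eq_of_lt h1
      have h3 : b.toNat / e = 0 := Nat.div_eq_of_lt h1
      simp only [h1, dif_pos, h2, h3, exists_true_left]
      constructor
      · rintro ⟨-, h⟩
        by_contra hc
        simp [hc] at h
      · intro h
        exact ⟨by omega, by simp [h]⟩
    · simp only [h1, dif_neg, not_false_eq_true, Bool.false_eq_true, iff_false]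
      rintro ⟨-, h, h4⟩
      have h5 : 1 ≤ b.toNat / e := (Nat.one_le_div_iff (by omega)).2 (by omega)
      split_ifs at h4 <;> omega

lemma sum_Ico_fin (f : ℤ → ℤ) :
    ∑ j ∈ Finset.Ico (0 : ℤ) e, f j = ∑ i : Fin e, f (i : ℕ) := by
  rw [← Fin.sum_univ_eq_sum_range (fun j : ℕ => f j) e |>.symm]
  refine (Finset.sum_nbij (fun j : ℕ => (j : ℤ)) ?_ ?_ ?_ ?_).symm
  · intro j hj
    simp only [Finset.mem_range, Finset.mem_Ico] at *
    omega
  · intro j _ j' _ h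
    simpa using h
  · intro j hj
    simp only [Finset.coe_Ico, Set.mem_Ico] at hj
    refine ⟨j.toNat, ?_, ?_⟩
    · simp; omega
    · simp only; omega
  · intro j _; rfl

lemma TM_fin (M : Fin 3 → Fin e → Bool) (s : Fin 3) (i : Fin e) : TM M s ((i : ℕ) : ℤ) = M s i := by
  have : ¬ (((i : ℕ) : ℤ) < 0) := by omega
  simp [TM, this]

/-- number of beads in each row -/
def nM (M : Fin 3 → Fin e → Bool) (s : Fin 3) : ℕ := nsum (fun _ => 0) M s

lemma nM_eq (M : Fin 3 → Fin e → Bool) (s : Fin 3) : (nM M s : ℤ) = ∑ i : Fin e, v (M s i) := by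
  unfold nM nsum
  push_cast
  refine Finset.sum_congr rfl fun i _ => ?_
  rw [beads_zero]
  unfold v
  split_ifs <;> rfl

lemma rep_PtPart (M : Fin 3 → Fin e → Bool) :
    Rep e (nM M) (TM M) (PtPart (fun _ => 0) M) := by
  have hneg : ∀ s b, b < 0 → TM M s b = true := by
    intro s b hb; simp [TM, hb]
  have hhi : ∀ s b, (e : ℤ) ≤ b → TM M s b = false := by
    intro s b hb
    have h1 : ¬ b < 0 := by omega
    have h2 : ¬ b.toNat < e := by omega
    simp [TM, h1, h2]
  have hneg' : ∀ s, ∀ b : ℤ, b < 0 → b ∈ Tset (fun _ => 0) M s := by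
    intro s b hb
    rw [Tset_zero]; exact hneg s b hb
  have hhi' : ∀ s, ∀ b : ℤ, (e : ℤ) ≤ b → b ∉ Tset (fun _ => 0) M s := by
    intro s b hb
    rw [Tset_zero, hhi s b hb]; simp
  have hcnt : ∀ s, ∑ i ∈ Finset.Ico (0 : ℤ) e, v (TM M s i) = nM M s := by
    intro s
    rw [nM_eq, sum_Ico_fin]
    simp only [TM_fin]
  have hbf : ∀ s, bf (nM M s) (PtPart (fun _ => 0) M s) = tEnum (Tset (fun _ => 0) M s) := by
    intro s
    funext x
    have hb := tEnum_bound (hneg' s) (hhi' s) x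
    have hc : (((Finset.Ico (0 : ℤ) e).filter (fun b => b ∈ Tset (fun _ => 0) M s)).card : ℤ)
        = nM M s := by
      rw [← hcnt s, Finset.card_filter]
      push_cast
      refine Finset.sum_congr rfl fun j _ => ?_
      simp only [Tset_zero, v]
    rw [hc] at hb
    unfold bf PtPart
    change (((tEnum (Tset (fun _ => 0) M s) x + (x + 1) - (nM M s : ℤ)).toNat : ℕ) : ℤ) + _ - _ - _
      = _
    omega
  refine ⟨?_, ?_, hneg, hhi, hcnt⟩
  · intro s
    rw [hbf]; exact tEnum_anti (hneg' s)
  · intro s b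
    rw [hbf, ← Tset_zero]
    constructor
    · exact fun hb => tEnum_surj (hneg' s) (hhi' s) hb
    · rintro ⟨x, rfl⟩
      exact tEnum_mem (hneg' s) (hhi' s) x

/-- extension of a path -/
lemma extend_path (he : 2 ≤ e) (r : Fin e → Fin 3) (hr : Monotone r) :
    ∃ r' : ℤ → Fin 3, Monotone r' ∧ ∀ i : Fin e, r' ((i : ℕ) : ℤ) = r i := by
  refine ⟨fun j => r ⟨min j.toNat (e - 1), by omega⟩, ?_, ?_⟩
  · intro j j' h
    apply hr
    rw [Fin.mk_le_mk]
    omega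
  · intro i
    dsimp only
    congr 1
    apply Fin.ext
    simp only [Int.toNat_natCast]
    omega

theorem kl_iff_paths (he : 2 ≤ e) (M : Fin 3 → Fin e → Bool) :
    IsKleshchev (PtCharge (fun _ => 0) M) (PtPart (fun _ => 0) M) ↔
      (∀ r : Fin e → Fin 3, Monotone r → ∃ s, ∑ i, v (M (r i).rev i) ≤ ∑ i, v (M s i)) ∧
      (∀ r : Fin e → Fin 3, Monotone r → ∃ s, ∑ i, v (M s i) ≤ ∑ i, v (M (r i) i)) := by
  rw [kl_iff (a := PtCharge (fun _ => 0) M) (n := nM M) (T := TM M) (fun s => rfl) (rep_PtPart M)]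
  unfold PMax PMin
  simp only [nM_eq, sum_Ico_fin, TM_fin]
  constructor
  · rintro ⟨h1, h2⟩
    constructor
    · intro r hr
      obtain ⟨r', hr', e'⟩ := extend_path he r hr
      have := h1 r' hr'
      simpa only [e'] using this
    · intro r hr
      obtain ⟨r', hr', e'⟩ := extend_path he r hr
      have := h2 r' hr'
      simpa only [e'] using this
  · rintro ⟨h1, h2⟩
    have hm : Monotone (fun i : Fin e => ((i : ℕ) : ℤ)) := by
      intro i j h
      simpa using h
    exact ⟨fun r hr => h1 (fun i => r (i : ℕ)) (hr.comp hm),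
      fun r hr => h2 (fun i => r (i : ℕ)) (hr.comp hm)⟩


/-- Row of maximal sum in the block `D^u`. -/
def mxr : Fin 6 → Fin 3 := ![2, 0, 1, 2, 1, 0]

/-- Row of minimal sum in the block `D^u`. -/
def mnr : Fin 6 → Fin 3 := ![0, 1, 2, 1, 0, 2]

/-- Contribution of a column to the path functional. -/
def colf (mm : Bool) (u : Fin 6) (c : Fin 3 → Bool) (t : Fin 3) : ℤ :=
  if mm = true then v (c t.rev) - v (c (mxr u)) else v (c (mnr u)) - v (c t)

theorem kl_iff_colf (he : 2 ≤ e) (u : Fin 6) (M : Fin 3 → Fin e → Bool)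
    (hmax : ∀ s, ∑ i, v (M s i) ≤ ∑ i, v (M (mxr u) i))
    (hmin : ∀ s, ∑ i, v (M (mnr u) i) ≤ ∑ i, v (M s i)) :
    IsKleshchev (PtCharge (fun _ => 0) M) (PtPart (fun _ => 0) M) ↔
      ∀ mm : Bool, ∀ r : Fin e → Fin 3, Monotone r →
        ∑ i, colf mm u (fun s => M s i) (r i) ≤ 0 := by
  rw [kl_iff_paths he]
  constructor
  · rintro ⟨h1, h2⟩ mm r hr
    cases mm
    · obtain ⟨s, hs⟩ := h2 r hr
      have := hmin s
      simp only [colf, Bool.false_eq_true, if_false, Finset.sum_sub_distrib]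
      linarith
    · obtain ⟨s, hs⟩ := h1 r hr
      have := hmax s
      simp only [colf, if_true, Finset.sum_sub_distrib]
      linarith
  · intro h
    constructor
    · intro r hr
      have := h true r hr
      simp only [colf, if_true, Finset.sum_sub_distrib] at this
      exact ⟨mxr u, by linarith⟩
    · intro r hr
      have := h false r hr
      simp only [colf, Bool.false_eq_true, if_false, Finset.sum_sub_distrib] at this
      exact ⟨mnr u, by linarith⟩

theorem sum_le_special (S : Finset (Fin e)) (f : Fin e → ℤ) (hf : ∀ i, i ∉ S → f i ≤ 0) :
    ∑ i, f i ≤ ∑ i ∈ S, f i := by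
  rw [← Finset.sum_add_sum_compl S f]
  have : ∑ i ∈ Sᶜ, f i ≤ 0 := Finset.sum_nonpos (fun i hi => hf i (by simpa using hi))
  linarith

theorem special_tight (S : Finset (Fin e)) (f : Fin e → ℤ) (hf : ∀ i, i ∉ S → f i ≤ 0)
    (h1 : ∑ i ∈ S, f i ≤ 1) (h : 0 < ∑ i, f i) :
    1 ≤ ∑ i ∈ S, f i ∧ ∀ i, i ∉ S → f i = 0 := by
  have h0 := sum_le_special S f hf
  refine ⟨by linarith, fun i hi => ?_⟩
  have h2 := sum_le_special (insert i S) f (fun j hj => hf j (fun h => hj (by simp [h])))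
  rw [Finset.sum_insert hi] at h2
  have := hf i hi
  omega

/-- Sufficient condition for a violating path, two special columns. -/
def S2 (P Q gY gZ : Fin 3 → ℤ) (Y1 Y2 Y3 Z1 Z2 Z3 : Bool) : Prop :=
  ∃ p q : Fin 3, p ≤ q ∧ 1 ≤ P p + Q q ∧
    (∃ w : Fin 3, w ≤ p ∧ (Y1 = false ∨ gY w = 0) ∧ (Z1 = false ∨ gZ w = 0)) ∧
    (∃ w : Fin 3, (p ≤ w ∧ w ≤ q) ∧ (Y2 = false ∨ gY w = 0) ∧ (Z2 = false ∨ gZ w = 0)) ∧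
    (∃ w : Fin 3, q ≤ w ∧ (Y3 = false ∨ gY w = 0) ∧ (Z3 = false ∨ gZ w = 0))

/-- Necessary condition for a violating path, two special columns. -/
def N2 (P Q gY gZ : Fin 3 → ℤ) (Y1 Y2 Y3 Z1 Z2 Z3 : Bool) : Prop :=
  ∃ p q : Fin 3, p ≤ q ∧ 1 ≤ P p + Q q ∧
    ((Y1 = false ∨ ∃ w : Fin 3, w ≤ p ∧ gY w = 0) ∧
      (Z1 = false ∨ ∃ w : Fin 3, w ≤ p ∧ gZ w = 0)) ∧
    ((Y2 = false ∨ ∃ w : Fin 3, (p ≤ w ∧ w ≤ q) ∧ gY w = 0) ∧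
      (Z2 = false ∨ ∃ w : Fin 3, (p ≤ w ∧ w ≤ q) ∧ gZ w = 0)) ∧
    ((Y3 = false ∨ ∃ w : Fin 3, q ≤ w ∧ gY w = 0) ∧
      (Z3 = false ∨ ∃ w : Fin 3, q ≤ w ∧ gZ w = 0))

def S1 (P gY gZ : Fin 3 → ℤ) (Y1 Y2 Z1 Z2 : Bool) : Prop :=
  ∃ p : Fin 3, 1 ≤ P p ∧
    (∃ w : Fin 3, w ≤ p ∧ (Y1 = false ∨ gY w = 0) ∧ (Z1 = false ∨ gZ w = 0)) ∧
    (∃ w : Fin 3, p ≤ w ∧ (Y2 = false ∨ gY w = 0) ∧ (Z2 = false ∨ gZ w = 0))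

def N1 (P gY gZ : Fin 3 → ℤ) (Y1 Y2 Z1 Z2 : Bool) : Prop :=
  ∃ p : Fin 3, 1 ≤ P p ∧
    ((Y1 = false ∨ ∃ w : Fin 3, w ≤ p ∧ gY w = 0) ∧
      (Z1 = false ∨ ∃ w : Fin 3, w ≤ p ∧ gZ w = 0)) ∧
    ((Y2 = false ∨ ∃ w : Fin 3, p ≤ w ∧ gY w = 0) ∧
      (Z2 = false ∨ ∃ w : Fin 3, p ≤ w ∧ gZ w = 0))

instance (P Q gY gZ : Fin 3 → ℤ) (Y1 Y2 Y3 Z1 Z2 Z3 : Bool) :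
    Decidable (S2 P Q gY gZ Y1 Y2 Y3 Z1 Z2 Z3) := by unfold S2; infer_instance
instance (P Q gY gZ : Fin 3 → ℤ) (Y1 Y2 Y3 Z1 Z2 Z3 : Bool) :
    Decidable (N2 P Q gY gZ Y1 Y2 Y3 Z1 Z2 Z3) := by unfold N2; infer_instance
instance (P gY gZ : Fin 3 → ℤ) (Y1 Y2 Z1 Z2 : Bool) :
    Decidable (S1 P gY gZ Y1 Y2 Z1 Z2) := by unfold S1; infer_instance
instance (P gY gZ : Fin 3 → ℤ) (Y1 Y2 Z1 Z2 : Bool) :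
    Decidable (N1 P gY gZ Y1 Y2 Z1 Z2) := by unfold N1; infer_instance

/-- Existence of an element of `A` satisfying `R`. -/
def ex (A : Finset (Fin e)) (R : Fin e → Prop) : Bool := decide (∃ i ∈ A, R i)

theorem ex_true {A : Finset (Fin e)} {R : Fin e → Prop} : ex A R = true ↔ ∃ i ∈ A, R i := by
  simp [ex]

theorem ex_or {A : Finset (Fin e)} {R : Fin e → Prop} {C : Prop}
    (h : ex A R = false ∨ C) {i : Fin e} (hi : i ∈ A) (hR : R i) : C := by
  rcases h with h | h
  · simp only [ex, decide_eq_false_iff_not] at h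
    exact absurd ⟨i, hi, hR⟩ h
  · exact h

theorem or_ex {A : Finset (Fin e)} {R : Fin e → Prop} {C : Prop}
    (h : ∀ i ∈ A, R i → C) : ex A R = false ∨ C := by
  by_cases hh : ∃ i ∈ A, R i
  · obtain ⟨i, hi, hR⟩ := hh
    exact Or.inr (h i hi hR)
  · left
    simpa [ex] using hh

theorem S2_path (Y Z : Finset (Fin e)) (g : Fin e → Fin 3 → ℤ) (P Q gY gZ : Fin 3 → ℤ)
    (p q : Fin e) (hpq : p < q) (hp : g p = P) (hq : g q = Q)
    (hy : ∀ i, i ≠ p → i ≠ q → i ∈ Y → g i = gY)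
    (hz : ∀ i, i ≠ p → i ≠ q → i ∈ Z → g i = gZ)
    (hx : ∀ i, i ≠ p → i ≠ q → i ∉ Y → i ∉ Z → g i = 0)
    (h : S2 P Q gY gZ (ex Y (· < p)) (ex Y (fun i => p < i ∧ i < q)) (ex Y (q < ·))
      (ex Z (· < p)) (ex Z (fun i => p < i ∧ i < q)) (ex Z (q < ·))) :
    ∃ r : Fin e → Fin 3, Monotone r ∧ 0 < ∑ i, g i (r i) := by
  obtain ⟨a, b, hab, h1, ⟨w1, hw1, hy1, hz1⟩, ⟨w2, hw2, hy2, hz2⟩, ⟨w3, hw3, hy3, hz3⟩⟩ := h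
  set r : Fin e → Fin 3 := fun i => if i < p then w1 else if i = p then a else
    if i < q then w2 else if i = q then b else w3 with hr
  refine ⟨r, ?_, ?_⟩
  · intro i j hij
    simp only [hr]
    split_ifs <;> first | exact le_rfl | (exfalso; omega) | omega
  · have h0 : ∀ i, i ∉ ({p, q} : Finset (Fin e)) → g i (r i) = 0 := by
      intro i hi
      simp only [Finset.mem_insert, Finset.mem_singleton, not_or] at hi
      obtain ⟨hip, hiq⟩ := hi
      by_cases hiY : i ∈ Y
      · rw [hy i hip hiq hiY]
        rcases lt_or_gt_of_ne hip with h | h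
        · have : r i = w1 := by simp [hr, h]
          rw [this]; exact ex_or hy1 hiY h
        rcases lt_or_gt_of_ne hiq with h' | h'
        · have : r i = w2 := by simp [hr, hip, h', not_lt.2 h.le]
          rw [this]; exact ex_or hy2 hiY ⟨h, h'⟩
        · have : r i = w3 := by simp [hr, hip, hiq, not_lt.2 h'.le, not_lt.2 h.le]
          rw [this]; exact ex_or hy3 hiY h'
      by_cases hiZ : i ∈ Z
      · rw [hz i hip hiq hiZ]
        rcases lt_or_gt_of_ne hip with h | h
        · have : r i = w1 := by simp [hr, h]
          rw [this]; exact ex_or hz1 hiZ h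
        rcases lt_or_gt_of_ne hiq with h' | h'
        · have : r i = w2 := by simp [hr, hip, h', not_lt.2 h.le]
          rw [this]; exact ex_or hz2 hiZ ⟨h, h'⟩
        · have : r i = w3 := by simp [hr, hip, hiq, not_lt.2 h'.le, not_lt.2 h.le]
          rw [this]; exact ex_or hz3 hiZ h'
      · rw [hx i hip hiq hiY hiZ]; rfl
    have h2 : ∑ i, g i (r i) = ∑ i ∈ ({p, q} : Finset (Fin e)), g i (r i) :=
      (Finset.sum_subset (Finset.subset_univ _) (fun i _ hi => h0 i hi)).symm
    rw [h2, Finset.sum_pair hpq.ne, hp, hq]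
    have e1 : r p = a := by simp [hr]
    have e2 : r q = b := by simp [hr, hpq.ne', not_lt.2 hpq.le]
    rw [e1, e2]
    linarith

theorem N2_path (Y Z : Finset (Fin e)) (g : Fin e → Fin 3 → ℤ) (P Q gY gZ : Fin 3 → ℤ)
    (p q : Fin e) (hpq : p < q) (hp : g p = P) (hq : g q = Q)
    (hy : ∀ i, i ≠ p → i ≠ q → i ∈ Y → g i = gY)
    (hz : ∀ i, i ≠ p → i ≠ q → i ∈ Z → g i = gZ)
    (hx : ∀ i, i ≠ p → i ≠ q → i ∉ Y → i ∉ Z → g i = 0)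
    (hgY : ∀ t, gY t ≤ 0) (hgZ : ∀ t, gZ t ≤ 0) (hPQ : ∀ t t', t ≤ t' → P t + Q t' ≤ 1)
    (r : Fin e → Fin 3) (hr : Monotone r) (h : 0 < ∑ i, g i (r i)) :
    N2 P Q gY gZ (ex Y (· < p)) (ex Y (fun i => p < i ∧ i < q)) (ex Y (q < ·))
      (ex Z (· < p)) (ex Z (fun i => p < i ∧ i < q)) (ex Z (q < ·)) := by
  have key := special_tight {p, q} (fun i => g i (r i)) (by
    intro i hi
    simp only [Finset.mem_insert, Finset.mem_singleton, not_or] at hi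
    by_cases hiY : i ∈ Y
    · rw [hy i hi.1 hi.2 hiY]; exact hgY _
    by_cases hiZ : i ∈ Z
    · rw [hz i hi.1 hi.2 hiZ]; exact hgZ _
    · rw [hx i hi.1 hi.2 hiY hiZ]; exact le_rfl) (by
    rw [Finset.sum_pair hpq.ne, hp, hq]
    exact hPQ _ _ (hr hpq.le)) h
  rw [Finset.sum_pair hpq.ne, hp, hq] at key
  obtain ⟨k1, k2⟩ := key
  have kY : ∀ i ∈ Y, i ≠ p → i ≠ q → gY (r i) = 0 := by
    intro i hi h1 h2
    rw [← hy i h1 h2 hi]; exact k2 i (by simp [h1, h2])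
  have kZ : ∀ i ∈ Z, i ≠ p → i ≠ q → gZ (r i) = 0 := by
    intro i hi h1 h2
    rw [← hz i h1 h2 hi]; exact k2 i (by simp [h1, h2])
  refine ⟨r p, r q, hr hpq.le, k1, ⟨or_ex ?_, or_ex ?_⟩, ⟨or_ex ?_, or_ex ?_⟩,
    ⟨or_ex ?_, or_ex ?_⟩⟩
  · exact fun i hi hR => ⟨r i, hr (le_of_lt hR), kY i hi (ne_of_lt hR) (ne_of_lt (hR.trans hpq))⟩
  · exact fun i hi hR => ⟨r i, hr (le_of_lt hR), kZ i hi (ne_of_lt hR) (ne_of_lt (hR.trans hpq))⟩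
  · exact fun i hi hR => ⟨r i, ⟨hr hR.1.le, hr hR.2.le⟩, kY i hi (ne_of_gt hR.1) (ne_of_lt hR.2)⟩
  · exact fun i hi hR => ⟨r i, ⟨hr hR.1.le, hr hR.2.le⟩, kZ i hi (ne_of_gt hR.1) (ne_of_lt hR.2)⟩
  · exact fun i hi hR => ⟨r i, hr (le_of_lt hR), kY i hi (ne_of_gt (hpq.trans hR)) (ne_of_gt hR)⟩
  · exact fun i hi hR => ⟨r i, hr (le_of_lt hR), kZ i hi (ne_of_gt (hpq.trans hR)) (ne_of_gt hR)⟩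

theorem S1_path (Y Z : Finset (Fin e)) (g : Fin e → Fin 3 → ℤ) (P gY gZ : Fin 3 → ℤ)
    (p : Fin e) (hp : g p = P)
    (hy : ∀ i, i ≠ p → i ∈ Y → g i = gY)
    (hz : ∀ i, i ≠ p → i ∈ Z → g i = gZ)
    (hx : ∀ i, i ≠ p → i ∉ Y → i ∉ Z → g i = 0)
    (h : S1 P gY gZ (ex Y (· < p)) (ex Y (p < ·)) (ex Z (· < p)) (ex Z (p < ·))) :
    ∃ r : Fin e → Fin 3, Monotone r ∧ 0 < ∑ i, g i (r i) := by
  obtain ⟨a, h1, ⟨w1, hw1, hy1, hz1⟩, ⟨w2, hw2, hy2, hz2⟩⟩ := h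
  set r : Fin e → Fin 3 := fun i => if i < p then w1 else if i = p then a else w2 with hr
  refine ⟨r, ?_, ?_⟩
  · intro i j hij
    simp only [hr]
    split_ifs <;> first | exact le_rfl | (exfalso; omega) | omega
  · have h0 : ∀ i, i ≠ p → g i (r i) = 0 := by
      intro i hip
      by_cases hiY : i ∈ Y
      · rw [hy i hip hiY]
        rcases lt_or_gt_of_ne hip with h | h
        · have : r i = w1 := by simp [hr, h]
          rw [this]; exact ex_or hy1 hiY h
        · have : r i = w2 := by simp [hr, hip, not_lt.2 h.le]
          rw [this]; exact ex_or hy2 hiY h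
      by_cases hiZ : i ∈ Z
      · rw [hz i hip hiZ]
        rcases lt_or_gt_of_ne hip with h | h
        · have : r i = w1 := by simp [hr, h]
          rw [this]; exact ex_or hz1 hiZ h
        · have : r i = w2 := by simp [hr, hip, not_lt.2 h.le]
          rw [this]; exact ex_or hz2 hiZ h
      · rw [hx i hip hiY hiZ]; rfl
    rw [Finset.sum_eq_single p (fun i _ hi => h0 i hi) (by simp), hp]
    have e1 : r p = a := by simp [hr]
    rw [e1]
    linarith

theorem N1_path (Y Z : Finset (Fin e)) (g : Fin e → Fin 3 → ℤ) (P gY gZ : Fin 3 → ℤ)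
    (p : Fin e) (hp : g p = P)
    (hy : ∀ i, i ≠ p → i ∈ Y → g i = gY)
    (hz : ∀ i, i ≠ p → i ∈ Z → g i = gZ)
    (hx : ∀ i, i ≠ p → i ∉ Y → i ∉ Z → g i = 0)
    (hgY : ∀ t, gY t ≤ 0) (hgZ : ∀ t, gZ t ≤ 0) (hP : ∀ t, P t ≤ 1)
    (r : Fin e → Fin 3) (hr : Monotone r) (h : 0 < ∑ i, g i (r i)) :
    N1 P gY gZ (ex Y (· < p)) (ex Y (p < ·)) (ex Z (· < p)) (ex Z (p < ·)) := by
  have key := special_tight {p} (fun i => g i (r i)) (by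
    intro i hi
    simp only [Finset.mem_singleton] at hi
    by_cases hiY : i ∈ Y
    · rw [hy i hi hiY]; exact hgY _
    by_cases hiZ : i ∈ Z
    · rw [hz i hi hiZ]; exact hgZ _
    · rw [hx i hi hiY hiZ]; exact le_rfl) (by
    rw [Finset.sum_singleton, hp]
    exact hP _) h
  rw [Finset.sum_singleton, hp] at key
  obtain ⟨k1, k2⟩ := key
  have kY : ∀ i ∈ Y, i ≠ p → gY (r i) = 0 := by
    intro i hi h1
    rw [← hy i h1 hi]; exact k2 i (by simp [h1])
  have kZ : ∀ i ∈ Z, i ≠ p → gZ (r i) = 0 := by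
    intro i hi h1
    rw [← hz i h1 hi]; exact k2 i (by simp [h1])
  refine ⟨r p, k1, ⟨or_ex ?_, or_ex ?_⟩, ⟨or_ex ?_, or_ex ?_⟩⟩
  · exact fun i hi hR => ⟨r i, hr (le_of_lt hR), kY i hi (ne_of_lt hR)⟩
  · exact fun i hi hR => ⟨r i, hr (le_of_lt hR), kZ i hi (ne_of_lt hR)⟩
  · exact fun i hi hR => ⟨r i, hr (le_of_lt hR), kY i hi (ne_of_gt hR)⟩
  · exact fun i hi hR => ⟨r i, hr (le_of_lt hR), kZ i hi (ne_of_gt hR)⟩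

theorem colf_y_le : ∀ (mm : Bool) (u : Fin 6) (t : Fin 3), colf mm u (ycol u) t ≤ 0 := by
  decide +kernel
theorem colf_z_le : ∀ (mm : Bool) (u : Fin 6) (t : Fin 3), colf mm u (zcol u) t ≤ 0 := by
  decide +kernel
theorem colf_x (mm : Bool) (u : Fin 6) : colf mm u (fun _ => false) = 0 := by
  funext t; cases mm <;> simp [colf]

/-- Two-special criterion. -/
theorem crit2 (he : 2 ≤ e) (u : Fin 6) (M : Fin 3 → Fin e → Bool) (Y Z : Finset (Fin e))
    (p q : Fin e) (hpq : p < q) (cP cQ : Fin 3 → Bool)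
    (hp : (fun s => M s p) = cP) (hq : (fun s => M s q) = cQ)
    (hy : ∀ i, i ≠ p → i ≠ q → i ∈ Y → (fun s => M s i) = ycol u)
    (hz : ∀ i, i ≠ p → i ≠ q → i ∈ Z → (fun s => M s i) = zcol u)
    (hx : ∀ i, i ≠ p → i ≠ q → i ∉ Y → i ∉ Z → (fun s => M s i) = fun _ => false)
    (hmax : ∀ s, ∑ i, v (M s i) ≤ ∑ i, v (M (mxr u) i))
    (hmin : ∀ s, ∑ i, v (M (mnr u) i) ≤ ∑ i, v (M s i))
    (hs : ∀ mm t t', colf mm u cP t + colf mm u cQ t' ≤ 1)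
    (c : Bool)
    (hN : c = true → ∀ mm, ¬ N2 (colf mm u cP) (colf mm u cQ) (colf mm u (ycol u))
      (colf mm u (zcol u)) (ex Y (· < p)) (ex Y (fun i => p < i ∧ i < q)) (ex Y (q < ·))
      (ex Z (· < p)) (ex Z (fun i => p < i ∧ i < q)) (ex Z (q < ·)))
    (hS : c = false → ∃ mm, S2 (colf mm u cP) (colf mm u cQ) (colf mm u (ycol u))
      (colf mm u (zcol u)) (ex Y (· < p)) (ex Y (fun i => p < i ∧ i < q)) (ex Y (q < ·))
      (ex Z (· < p)) (ex Z (fun i => p < i ∧ i < q)) (ex Z (q < ·))) :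
    IsKleshchev (PtCharge (fun _ => 0) M) (PtPart (fun _ => 0) M) ↔ c = true := by
  rw [kl_iff_colf he u M hmax hmin]
  constructor
  · intro h
    by_contra hc
    obtain ⟨mm, hm⟩ := hS (by simpa using hc)
    obtain ⟨r, hr, hr'⟩ := S2_path Y Z (fun i => colf mm u (fun s => M s i)) _ _ _ _ p q hpq
      (congrArg _ hp) (congrArg _ hq) (fun i h1 h2 h3 => congrArg _ (hy i h1 h2 h3))
      (fun i h1 h2 h3 => congrArg _ (hz i h1 h2 h3))
      (fun i h1 h2 h3 h4 => by rw [hx i h1 h2 h3 h4]; exact colf_x mm u) hm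
    exact absurd (h mm r hr) (not_le.2 hr')
  · intro hc mm r hr
    by_contra hh
    exact hN hc mm (N2_path Y Z (fun i => colf mm u (fun s => M s i)) _ _ _ _ p q hpq
      (congrArg _ hp) (congrArg _ hq) (fun i h1 h2 h3 => congrArg _ (hy i h1 h2 h3))
      (fun i h1 h2 h3 => congrArg _ (hz i h1 h2 h3))
      (fun i h1 h2 h3 h4 => by rw [hx i h1 h2 h3 h4]; exact colf_x mm u)
      (colf_y_le mm u) (colf_z_le mm u) (fun t t' _ => hs mm t t') r hr (not_le.1 hh))

/-- One-special criterion. -/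
theorem crit1 (he : 2 ≤ e) (u : Fin 6) (M : Fin 3 → Fin e → Bool) (Y Z : Finset (Fin e))
    (p : Fin e) (cP : Fin 3 → Bool)
    (hp : (fun s => M s p) = cP)
    (hy : ∀ i, i ≠ p → i ∈ Y → (fun s => M s i) = ycol u)
    (hz : ∀ i, i ≠ p → i ∈ Z → (fun s => M s i) = zcol u)
    (hx : ∀ i, i ≠ p → i ∉ Y → i ∉ Z → (fun s => M s i) = fun _ => false)
    (hmax : ∀ s, ∑ i, v (M s i) ≤ ∑ i, v (M (mxr u) i))
    (hmin : ∀ s, ∑ i, v (M (mnr u) i) ≤ ∑ i, v (M s i))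
    (hs : ∀ mm t, colf mm u cP t ≤ 1)
    (c : Bool)
    (hN : c = true → ∀ mm, ¬ N1 (colf mm u cP) (colf mm u (ycol u))
      (colf mm u (zcol u)) (ex Y (· < p)) (ex Y (p < ·)) (ex Z (· < p)) (ex Z (p < ·)))
    (hS : c = false → ∃ mm, S1 (colf mm u cP) (colf mm u (ycol u))
      (colf mm u (zcol u)) (ex Y (· < p)) (ex Y (p < ·)) (ex Z (· < p)) (ex Z (p < ·))) :
    IsKleshchev (PtCharge (fun _ => 0) M) (PtPart (fun _ => 0) M) ↔ c = true := by
  rw [kl_iff_colf he u M hmax hmin]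
  constructor
  · intro h
    by_contra hc
    obtain ⟨mm, hm⟩ := hS (by simpa using hc)
    obtain ⟨r, hr, hr'⟩ := S1_path Y Z (fun i => colf mm u (fun s => M s i)) _ _ _ p
      (congrArg _ hp) (fun i h1 h3 => congrArg _ (hy i h1 h3))
      (fun i h1 h3 => congrArg _ (hz i h1 h3))
      (fun i h1 h3 h4 => by rw [hx i h1 h3 h4]; exact colf_x mm u) hm
    exact absurd (h mm r hr) (not_le.2 hr')
  · intro hc mm r hr
    by_contra hh
    exact hN hc mm (N1_path Y Z (fun i => colf mm u (fun s => M s i)) _ _ _ p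
      (congrArg _ hp) (fun i h1 h3 => congrArg _ (hy i h1 h3))
      (fun i h1 h3 => congrArg _ (hz i h1 h3))
      (fun i h1 h3 h4 => by rw [hx i h1 h3 h4]; exact colf_x mm u)
      (colf_y_le mm u) (colf_z_le mm u) (hs mm) r hr (not_le.1 hh))

/-- The conditions in terms of the flags. -/
def cgl (u : Fin 6) (Y1 Z3 : Bool) : Bool := (![Z3, Y1 && Z3, Y1 && Z3, true, true, Y1] : Fin 6 → Bool) u
def cgg (u : Fin 6) (Z1 Y3 : Bool) : Bool := (![Y3, true, true, Z1 && Y3, Z1 && Y3, Z1] : Fin 6 → Bool) u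
def cal (u : Fin 6) (Y1 Y2 Z1 Z2 : Bool) : Bool :=
  (![Z2, Y1 && Z2, Y1 && Z2, Y2 && Z1, Y2 && Z1, Z1] : Fin 6 → Bool) u
def cbe (u : Fin 6) (Y1 Y2 : Bool) : Bool := (![Y2, Y1, Y1, Y2, Y2, Y1] : Fin 6 → Bool) u

theorem fin_cgl_N : ∀ (u : Fin 6) (Y1 Y2 Y3 Z1 Z2 Z3 mm : Bool), cgl u Y1 Z3 = true →
    ¬ N2 (colf mm u (oycol u)) (colf mm u (ozcol u)) (colf mm u (ycol u)) (colf mm u (zcol u))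
      Y1 Y2 Y3 Z1 Z2 Z3 := by decide +kernel
theorem fin_cgl_S : ∀ (u : Fin 6) (Y1 Y2 Y3 Z1 Z2 Z3 : Bool), cgl u Y1 Z3 = false →
    ∃ mm, S2 (colf mm u (oycol u)) (colf mm u (ozcol u)) (colf mm u (ycol u)) (colf mm u (zcol u))
      Y1 Y2 Y3 Z1 Z2 Z3 := by decide +kernel
theorem fin_cgg_N : ∀ (u : Fin 6) (Y1 Y2 Y3 Z1 Z2 Z3 mm : Bool), cgg u Z1 Y3 = true →
    ¬ N2 (colf mm u (ozcol u)) (colf mm u (oycol u)) (colf mm u (ycol u)) (colf mm u (zcol u))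
      Y1 Y2 Y3 Z1 Z2 Z3 := by decide +kernel
theorem fin_cgg_S : ∀ (u : Fin 6) (Y1 Y2 Y3 Z1 Z2 Z3 : Bool), cgg u Z1 Y3 = false →
    ∃ mm, S2 (colf mm u (ozcol u)) (colf mm u (oycol u)) (colf mm u (ycol u)) (colf mm u (zcol u))
      Y1 Y2 Y3 Z1 Z2 Z3 := by decide +kernel
theorem fin_cal_N : ∀ (u : Fin 6) (Y1 Y2 Z1 Z2 mm : Bool), cal u Y1 Y2 Z1 Z2 = true →
    ¬ N1 (colf mm u (aacol u)) (colf mm u (ycol u)) (colf mm u (zcol u))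
      Y1 Y2 Z1 Z2 := by decide +kernel
theorem fin_cal_S : ∀ (u : Fin 6) (Y1 Y2 Z1 Z2 : Bool), cal u Y1 Y2 Z1 Z2 = false →
    ∃ mm, S1 (colf mm u (aacol u)) (colf mm u (ycol u)) (colf mm u (zcol u))
      Y1 Y2 Z1 Z2 := by decide +kernel
theorem fin_cbe_N : ∀ (u : Fin 6) (Y1 Y2 Z1 Z2 mm : Bool), cbe u Y1 Y2 = true →
    ¬ N1 (colf mm u (abcol u)) (colf mm u (ycol u)) (colf mm u (zcol u))
      Y1 Y2 Z1 Z2 := by decide +kernel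
theorem fin_cbe_S : ∀ (u : Fin 6) (Y1 Y2 Z1 Z2 : Bool), cbe u Y1 Y2 = false →
    ∃ mm, S1 (colf mm u (abcol u)) (colf mm u (ycol u)) (colf mm u (zcol u))
      Y1 Y2 Z1 Z2 := by decide +kernel
theorem fin_g1 : ∀ (u : Fin 6) (mm : Bool) (t t' : Fin 3),
    colf mm u (oycol u) t + colf mm u (ozcol u) t' ≤ 1 := by decide +kernel
theorem fin_a1 : ∀ (u : Fin 6) (mm : Bool) (t : Fin 3), colf mm u (aacol u) t ≤ 1 := by
  decide +kernel
theorem fin_b1 : ∀ (u : Fin 6) (mm : Bool) (t : Fin 3), colf mm u (abcol u) t ≤ 1 := by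
  decide +kernel
theorem fin_g0 : ∀ (mm : Bool) (u : Fin 6) (t : Fin 3),
    colf mm u (oycol u) t + colf mm u (ozcol u) t ≤ 0 := by decide +kernel
theorem fin_a0 : ∀ (mm : Bool) (u : Fin 6) (t : Fin 3),
    colf mm u (aacol u) t + colf mm u (zcol u) t ≤ 0 := by decide +kernel
theorem fin_b0 : ∀ (mm : Bool) (u : Fin 6) (t : Fin 3),
    colf mm u (abcol u) t + colf mm u (ycol u) t ≤ 0 := by decide +kernel


theorem rows_bound (u : Fin 6) (M : Fin 3 → Fin e → Bool) (p q : Fin e) (hpq : p ≠ q)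
    (h0 : ∀ mm i t, i ≠ p → i ≠ q → colf mm u (fun s => M s i) t ≤ 0)
    (h1 : ∀ mm t, colf mm u (fun s => M s p) t + colf mm u (fun s => M s q) t ≤ 0) :
    (∀ s, ∑ i, v (M s i) ≤ ∑ i, v (M (mxr u) i)) ∧
    (∀ s, ∑ i, v (M (mnr u) i) ≤ ∑ i, v (M s i)) := by
  have key : ∀ mm t, ∑ i, colf mm u (fun s => M s i) t ≤ 0 := by
    intro mm t
    have h2 := sum_le_special {p, q} (fun i => colf mm u (fun s => M s i) t) (by
      intro i hi
      simp only [Finset.mem_insert, Finset.mem_singleton, not_or] at hi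
      exact h0 mm i t hi.1 hi.2)
    rw [Finset.sum_pair hpq] at h2
    exact h2.trans (h1 mm t)
  constructor
  · intro s
    have := key true s.rev
    simp only [colf, if_true, Finset.sum_sub_distrib, Fin.rev_rev] at this
    linarith
  · intro s
    have := key false s
    simp only [colf, Bool.false_eq_true, if_false, Finset.sum_sub_distrib] at this
    linarith

theorem ord_le (u : Fin 6) (Y Z : Finset (Fin e)) (c : Fin 3 → Bool) (i : Fin e)
    (hy : i ∈ Y → c = ycol u) (hz : i ∈ Z → c = zcol u)
    (hx : i ∉ Y → i ∉ Z → c = fun _ => false) (mm : Bool) (t : Fin 3) : colf mm u c t ≤ 0 := by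
  by_cases hiY : i ∈ Y
  · rw [hy hiY]; exact colf_y_le mm u t
  by_cases hiZ : i ∈ Z
  · rw [hz hiZ]; exact colf_z_le mm u t
  · rw [hx hiY hiZ, colf_x]; exact le_rfl

section main
variable (Y Z : Finset (Fin e)) {y z : ℕ} (hY : Y.card = y + 1)
  (hZ : Z.card = z + 1) (u : Fin 6)

theorem emb_mem {A : Finset (Fin e)} {n : ℕ} (hA : A.card = n) (k : Fin n) :
    A.orderEmbOfFin hA k ∈ A := Finset.orderEmbOfFin_mem A hA k

theorem emb_surj {A : Finset (Fin e)} {n : ℕ} (hA : A.card = n) {i : Fin e} (hi : i ∈ A) :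
    ∃ k, A.orderEmbOfFin hA k = i := by
  have : i ∈ Set.range (A.orderEmbOfFin hA) := by
    rw [Finset.range_orderEmbOfFin]; exact hi
  exact this

theorem ex_lt_self {A : Finset (Fin e)} {n : ℕ} (hA : A.card = n + 1) (k : Fin (n + 1)) :
    ex A (· < A.orderEmbOfFin hA k) = true ↔ k ≠ 0 := by
  rw [ex_true]
  constructor
  · rintro ⟨i, hi, h⟩ rfl
    obtain ⟨m, rfl⟩ := emb_surj hA hi
    rw [OrderEmbedding.lt_iff_lt] at h
    exact absurd h (not_lt.2 (Fin.zero_le m))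
  · intro h
    exact ⟨_, emb_mem hA 0, by
      rw [OrderEmbedding.lt_iff_lt]; exact Fin.pos_iff_ne_zero.2 h⟩

theorem ex_gt_self {A : Finset (Fin e)} {n : ℕ} (hA : A.card = n + 1) (k : Fin (n + 1)) :
    ex A (A.orderEmbOfFin hA k < ·) = true ↔ k ≠ Fin.last n := by
  rw [ex_true]
  constructor
  · rintro ⟨i, hi, h⟩ rfl
    obtain ⟨m, rfl⟩ := emb_surj hA hi
    rw [OrderEmbedding.lt_iff_lt] at h
    exact absurd h (not_lt.2 (Fin.le_last m))
  · intro h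
    exact ⟨_, emb_mem hA (Fin.last n), by
      rw [OrderEmbedding.lt_iff_lt]; exact Fin.lt_last_iff_ne_last.2 h⟩

theorem ex_lt {A : Finset (Fin e)} {n : ℕ} (hA : A.card = n + 1) (p : Fin e) :
    ex A (· < p) = true ↔ A.orderEmbOfFin hA 0 < p := by
  rw [ex_true]
  constructor
  · rintro ⟨i, hi, h⟩
    obtain ⟨m, rfl⟩ := emb_surj hA hi
    exact lt_of_le_of_lt ((A.orderEmbOfFin hA).monotone (Fin.zero_le m)) h
  · exact fun h => ⟨_, emb_mem hA 0, h⟩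

theorem ex_gt {A : Finset (Fin e)} {n : ℕ} (hA : A.card = n + 1) (p : Fin e) :
    ex A (p < ·) = true ↔ p < A.orderEmbOfFin hA (Fin.last n) := by
  rw [ex_true]
  constructor
  · rintro ⟨i, hi, h⟩
    obtain ⟨m, rfl⟩ := emb_surj hA hi
    exact lt_of_lt_of_le h ((A.orderEmbOfFin hA).monotone (Fin.le_last m))
  · exact fun h => ⟨_, emb_mem hA (Fin.last n), h⟩


theorem kl_alpha (he : 2 ≤ e) (hYZ : Disjoint Y Z) (hZ : Z.card = z + 1) (k : Fin (y + 1)) :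
    IsKleshchev (PtCharge (fun _ => 0) (alphaM Y Z hY u k))
      (PtPart (fun _ => 0) (alphaM Y Z hY u k)) ↔
    cal u (ex Y (· < Y.orderEmbOfFin hY k)) (ex Y (Y.orderEmbOfFin hY k < ·))
      (ex Z (· < Y.orderEmbOfFin hY k)) (ex Z (Y.orderEmbOfFin hY k < ·)) = true := by
  set p := Y.orderEmbOfFin hY k with hpdef
  set q := Z.orderEmbOfFin hZ 0 with hqdef
  have hpY : p ∈ Y := emb_mem hY k
  have hqZ : q ∈ Z := emb_mem hZ 0
  have hd : ∀ i, i ∈ Z → i ∉ Y := fun i h1 h2 => Finset.disjoint_left.1 hYZ h2 h1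
  have hqp : q ≠ p := fun h => hd q hqZ (h ▸ hpY)
  have hp : (fun s => alphaM Y Z hY u k s p) = aacol u := by
    funext s; simp [alphaM, ← hpdef]
  have hy : ∀ i, i ≠ p → i ∈ Y → (fun s => alphaM Y Z hY u k s i) = ycol u := by
    intro i h1 h2; funext s; simp [alphaM, ← hpdef, h1, h2]
  have hz : ∀ i, i ≠ p → i ∈ Z → (fun s => alphaM Y Z hY u k s i) = zcol u := by
    intro i h1 h2; funext s; simp [alphaM, ← hpdef, h1, h2, hd i h2]
  have hx : ∀ i, i ≠ p → i ∉ Y → i ∉ Z → (fun s => alphaM Y Z hY u k s i) = fun _ => false := by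
    intro i h1 h2 h3; funext s; simp [alphaM, ← hpdef, h1, h2, h3]
  obtain ⟨hmax, hmin⟩ := rows_bound u (alphaM Y Z hY u k) p q hqp.symm
    (fun mm i t h1 _ => ord_le u Y Z _ i (hy i h1) (hz i h1) (hx i h1) mm t)
    (fun mm t => by rw [hp, hz q hqp hqZ]; exact fin_a0 mm u t)
  exact crit1 he u _ Y Z p _ hp hy hz hx hmax hmin (fin_a1 u) _
    (fun hc mm => fin_cal_N u _ _ _ _ mm hc) (fin_cal_S u _ _ _ _)


theorem kl_beta (he : 2 ≤ e) (hYZ : Disjoint Y Z) (hY : Y.card = y + 1) (l : Fin (z + 1)) :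
    IsKleshchev (PtCharge (fun _ => 0) (betaM Y Z hZ u l))
      (PtPart (fun _ => 0) (betaM Y Z hZ u l)) ↔
    cbe u (ex Y (· < Z.orderEmbOfFin hZ l)) (ex Y (Z.orderEmbOfFin hZ l < ·)) = true := by
  set p := Z.orderEmbOfFin hZ l with hpdef
  set q := Y.orderEmbOfFin hY 0 with hqdef
  have hpZ : p ∈ Z := emb_mem hZ l
  have hqY : q ∈ Y := emb_mem hY 0
  have hd : ∀ i, i ∈ Y → i ∉ Z := fun i h1 h2 => Finset.disjoint_left.1 hYZ h1 h2
  have hqp : q ≠ p := fun h => hd q hqY (h ▸ hpZ)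
  have hp : (fun s => betaM Y Z hZ u l s p) = abcol u := by
    funext s; simp [betaM, ← hpdef]
  have hy : ∀ i, i ≠ p → i ∈ Y → (fun s => betaM Y Z hZ u l s i) = ycol u := by
    intro i h1 h2; funext s; simp [betaM, ← hpdef, h1, h2, hd i h2]
  have hz : ∀ i, i ≠ p → i ∈ Z → (fun s => betaM Y Z hZ u l s i) = zcol u := by
    intro i h1 h2; funext s; simp [betaM, ← hpdef, h1, h2]
  have hx : ∀ i, i ≠ p → i ∉ Y → i ∉ Z → (fun s => betaM Y Z hZ u l s i) = fun _ => false := by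
    intro i h1 h2 h3; funext s; simp [betaM, ← hpdef, h1, h2, h3]
  obtain ⟨hmax, hmin⟩ := rows_bound u (betaM Y Z hZ u l) p q hqp.symm
    (fun mm i t h1 _ => ord_le u Y Z _ i (hy i h1) (hz i h1) (hx i h1) mm t)
    (fun mm t => by rw [hp, hy q hqp hqY]; exact fin_b0 mm u t)
  exact crit1 he u _ Y Z p _ hp hy hz hx hmax hmin (fin_b1 u) _
    (fun hc mm => fin_cbe_N u _ _ _ _ mm hc) (fin_cbe_S u _ _ _ _)


theorem kl_gamma (he : 2 ≤ e) (hYZ : Disjoint Y Z) (k : Fin (y + 1)) (l : Fin (z + 1)) :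
    IsKleshchev (PtCharge (fun _ => 0) (gammaM Y Z hY hZ u k l))
      (PtPart (fun _ => 0) (gammaM Y Z hY hZ u k l)) ↔
    (Y.orderEmbOfFin hY k < Z.orderEmbOfFin hZ l ∧
      cgl u (ex Y (· < Y.orderEmbOfFin hY k)) (ex Z (Z.orderEmbOfFin hZ l < ·)) = true) ∨
    (Z.orderEmbOfFin hZ l < Y.orderEmbOfFin hY k ∧
      cgg u (ex Z (· < Z.orderEmbOfFin hZ l)) (ex Y (Y.orderEmbOfFin hY k < ·)) = true) := by
  set p := Y.orderEmbOfFin hY k with hpdef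
  set q := Z.orderEmbOfFin hZ l with hqdef
  have hpY : p ∈ Y := emb_mem hY k
  have hqZ : q ∈ Z := emb_mem hZ l
  have hd : ∀ i, i ∈ Z → i ∉ Y := fun i h1 h2 => Finset.disjoint_left.1 hYZ h2 h1
  have hqp : q ≠ p := fun h => hd q hqZ (h ▸ hpY)
  have hp : (fun s => gammaM Y Z hY hZ u k l s p) = oycol u := by
    funext s; simp [gammaM, ← hpdef]
  have hq : (fun s => gammaM Y Z hY hZ u k l s q) = ozcol u := by
    funext s; simp [gammaM, ← hpdef, ← hqdef, hqp]
  have hy : ∀ i, i ≠ p → i ≠ q → i ∈ Y → (fun s => gammaM Y Z hY hZ u k l s i) = ycol u := by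
    intro i h1 h2 h3; funext s; simp [gammaM, ← hpdef, ← hqdef, h1, h2, h3]
  have hz : ∀ i, i ≠ p → i ≠ q → i ∈ Z → (fun s => gammaM Y Z hY hZ u k l s i) = zcol u := by
    intro i h1 h2 h3; funext s; simp [gammaM, ← hpdef, ← hqdef, h1, h2, h3, hd i h3]
  have hx : ∀ i, i ≠ p → i ≠ q → i ∉ Y → i ∉ Z →
      (fun s => gammaM Y Z hY hZ u k l s i) = fun _ => false := by
    intro i h1 h2 h3 h4; funext s; simp [gammaM, ← hpdef, ← hqdef, h1, h2, h3, h4]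
  obtain ⟨hmax, hmin⟩ := rows_bound u (gammaM Y Z hY hZ u k l) p q hqp.symm
    (fun mm i t h1 h2 => ord_le u Y Z _ i (hy i h1 h2) (hz i h1 h2) (hx i h1 h2) mm t)
    (fun mm t => by rw [hp, hq]; exact fin_g0 mm u t)
  rcases lt_or_gt_of_ne hqp with h | h
  · rw [crit2 he u _ Y Z q p h _ _ hq hp (fun i h1 h2 => hy i h2 h1) (fun i h1 h2 => hz i h2 h1)
      (fun i h1 h2 => hx i h2 h1) hmax hmin
      (fun mm t t' => by rw [add_comm]; exact fin_g1 u mm t' t) _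
      (fun hc mm => fin_cgg_N u _ _ _ _ _ _ mm hc) (fin_cgg_S u _ _ _ _ _ _)]
    simp [h, h.not_gt]
  · rw [crit2 he u _ Y Z p q h _ _ hp hq hy hz hx hmax hmin (fin_g1 u) _
      (fun hc mm => fin_cgl_N u _ _ _ _ _ _ mm hc) (fin_cgl_S u _ _ _ _ _ _)]
    simp [h, h.not_gt]

end main

set_option maxHeartbeats 2000000 in
/-- Classification of the Kleshchev multipartitions in `D^u`
(`u : Fin 6` corresponds to the paper's `u ∈ {1,…,6}`). -/
theorem Duset_kleshchev_classification (e : ℕ) (he : 2 ≤ e)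
    (X Y Z : Finset (Fin e)) {y z : ℕ} (hY : Y.card = y + 1) (hZ : Z.card = z + 1)
    (hXY : Disjoint X Y) (hXZ : Disjoint X Z) (hYZ : Disjoint Y Z)
    (hcover : X ∪ Y ∪ Z = Finset.univ)
    (u : Fin 6) (M : Fin 3 → Fin e → Bool) (hM : M ∈ Duset Y Z hY hZ u) :
    IsKleshchev (PtCharge (fun _ => 0) M) (PtPart (fun _ => 0) M) ↔
      ((u = 0 ∧ (
        (∃ k l, M = gammaM Y Z hY hZ u k l ∧
          Y.orderEmbOfFin hY k < Z.orderEmbOfFin hZ l ∧ l ≠ Fin.last z) ∨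
        (∃ k l, M = gammaM Y Z hY hZ u k l ∧
          Z.orderEmbOfFin hZ l < Y.orderEmbOfFin hY k ∧ k ≠ Fin.last y) ∨
        (∃ k, M = alphaM Y Z hY u k ∧
          Y.orderEmbOfFin hY k < Z.orderEmbOfFin hZ (Fin.last z)) ∨
        (∃ l, M = betaM Y Z hZ u l ∧
          Z.orderEmbOfFin hZ l < Y.orderEmbOfFin hY (Fin.last y)))) ∨
      ((u = 1 ∨ u = 2) ∧ (
        (∃ k l, M = gammaM Y Z hY hZ u k l ∧
          (Z.orderEmbOfFin hZ l < Y.orderEmbOfFin hY k ∨ (k ≠ 0 ∧ l ≠ Fin.last z))) ∨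
        (∃ k, M = alphaM Y Z hY u k ∧ k ≠ 0 ∧
          Y.orderEmbOfFin hY k < Z.orderEmbOfFin hZ (Fin.last z)) ∨
        (∃ l, M = betaM Y Z hZ u l ∧
          Y.orderEmbOfFin hY 0 < Z.orderEmbOfFin hZ l))) ∨
      ((u = 3 ∨ u = 4) ∧ (
        (∃ k l, M = gammaM Y Z hY hZ u k l ∧
          (Y.orderEmbOfFin hY k < Z.orderEmbOfFin hZ l ∨ (l ≠ 0 ∧ k ≠ Fin.last y))) ∨
        (∃ k, M = alphaM Y Z hY u k ∧ k ≠ Fin.last y ∧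
          Z.orderEmbOfFin hZ 0 < Y.orderEmbOfFin hY k) ∨
        (∃ l, M = betaM Y Z hZ u l ∧
          Z.orderEmbOfFin hZ l < Y.orderEmbOfFin hY (Fin.last y)))) ∨
      (u = 5 ∧ (
        (∃ k l, M = gammaM Y Z hY hZ u k l ∧
          Y.orderEmbOfFin hY k < Z.orderEmbOfFin hZ l ∧ k ≠ 0) ∨
        (∃ k l, M = gammaM Y Z hY hZ u k l ∧
          Z.orderEmbOfFin hZ l < Y.orderEmbOfFin hY k ∧ l ≠ 0) ∨
        (∃ k, M = alphaM Y Z hY u k ∧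
          Z.orderEmbOfFin hZ 0 < Y.orderEmbOfFin hY k) ∨
        (∃ l, M = betaM Y Z hZ u l ∧
          Y.orderEmbOfFin hY 0 < Z.orderEmbOfFin hZ l)))) := by
  have hA := fun k => kl_alpha Y Z hY u he hYZ hZ k
  have hB := fun l => kl_beta Y Z hZ u he hYZ hY l
  have hG := fun k l => kl_gamma Y Z hY hZ u he hYZ k l
  have hne : ∀ k l, Y.orderEmbOfFin hY k < Z.orderEmbOfFin hZ l ∨
      Z.orderEmbOfFin hZ l < Y.orderEmbOfFin hY k := by
    intro k l
    refine lt_or_gt_of_ne (fun h => ?_)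
    exact Finset.disjoint_left.1 hYZ (emb_mem hY k) (h ▸ emb_mem hZ l)
  constructor
  · intro hK
    rcases hM with ⟨k, rfl⟩ | ⟨l, rfl⟩ | ⟨k, l, rfl⟩
    · have h := (hA k).1 hK
      clear hA hB hG hK
      fin_cases u <;>
        simp [cal, ex_lt_self, ex_gt_self, ex_lt hZ, ex_gt hZ] at h ⊢ <;>
        grind
    · have h := (hB l).1 hK
      clear hA hB hG hK
      fin_cases u <;>
        simp [cbe, ex_lt hY, ex_gt hY] at h ⊢ <;>
        grind
    · have h := (hG k l).1 hK
      have hn := hne k l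
      clear hA hB hG hK
      fin_cases u <;>
        simp [cgl, cgg, ex_lt_self, ex_gt_self] at h ⊢ <;>
        grind
  · intro h
    rcases h with ⟨rfl, h⟩ | ⟨rfl | rfl, h⟩ | ⟨rfl | rfl, h⟩ | ⟨rfl, h⟩
    · rcases h with ⟨k, l, rfl, h⟩ | ⟨k, l, rfl, h⟩ | ⟨k, rfl, h⟩ | ⟨l, rfl, h⟩
      · rw [hG k l]; simp [cgl, cgg, ex_lt_self, ex_gt_self]; clear hA hB hG; grind
      · rw [hG k l]; simp [cgl, cgg, ex_lt_self, ex_gt_self]; clear hA hB hG; grind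
      · rw [hA k]; simpa [cal, ex_lt_self, ex_gt_self, ex_lt hZ, ex_gt hZ] using h
      · rw [hB l]; simpa [cbe, ex_lt hY, ex_gt hY] using h
    iterate 2
      rcases h with ⟨k, l, rfl, h⟩ | ⟨k, rfl, h⟩ | ⟨l, rfl, h⟩
      · have hn := hne k l
        rw [hG k l]; simp [cgl, cgg, ex_lt_self, ex_gt_self]; clear hA hB hG; grind
      · rw [hA k]; simpa [cal, ex_lt_self, ex_gt_self, ex_lt hZ, ex_gt hZ] using h
      · rw [hB l]; simpa [cbe, ex_lt hY, ex_gt hY] using h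
    iterate 2
      rcases h with ⟨k, l, rfl, h⟩ | ⟨k, rfl, h⟩ | ⟨l, rfl, h⟩
      · have hn := hne k l
        rw [hG k l]; simp [cgl, cgg, ex_lt_self, ex_gt_self]; clear hA hB hG; grind
      · rw [hA k]; simpa [cal, ex_lt_self, ex_gt_self, ex_lt hZ, ex_gt hZ] using h
      · rw [hB l]; simpa [cbe, ex_lt hY, ex_gt hY] using h
    · rcases h with ⟨k, l, rfl, h⟩ | ⟨k, l, rfl, h⟩ | ⟨k, rfl, h⟩ | ⟨l, rfl, h⟩
      · rw [hG k l]; simp [cgl, cgg, ex_lt_self, ex_gt_self]; clear hA hB hG; grind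
      · rw [hG k l]; simp [cgl, cgg, ex_lt_self, ex_gt_self]; clear hA hB hG; grind
      · rw [hA k]; simpa [cal, ex_lt_self, ex_gt_self, ex_lt hZ, ex_gt hZ] using h
      · rw [hB l]; simpa [cbe, ex_lt hY, ex_gt hY] using h


end
end AK
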